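/- arXiv:1909.11858 — 2 statements merged into one kernel-verified Lean document; each statement's English description precedes it below -/
import Mathlib

section
/- For a prime p, the class number h(ℚ(√p)) of the real quadratic field ℚ(√p) is odd. -/
open NumberField

/-- Abstract setting: the ring of integers of a real quadratic field `ℚ(√p)` with conjugation `s`
and square root `t` of `p`. -/
structure QuadSetting (R : Type*) [CommRing R] [IsDedekindDomain R] [Module.Free ℤ R]
    [Module.Finite ℤ R] (s : R ≃+* R) (t : R) (p : ℕ) : Prop where
  prime : p.Prime
  invol : ∀ x, s (s x) = x
  norm : ∀ x, ((Algebra.norm ℤ x : ℤ) : R) = x * s x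
  sq : t ^ 2 = (p : R)
  conj : s t = -t
  rank : Module.finrank ℤ R = 2
  half : p % 4 = 1 → ∃ w : R, w + s w = 1
  unit : ∃ e : Rˣ, ∀ u : Rˣ, e ≠ u ^ 2 ∧ e ≠ -u ^ 2

namespace QuadSetting

set_option linter.unusedSectionVars false

variable {R : Type*} [CommRing R] [IsDedekindDomain R] [Module.Free ℤ R]
    [Module.Finite ℤ R] [CharZero R] {s : R ≃+* R} {t : R} {p : ℕ}

theorem t_ne_zero (h : QuadSetting R s t p) : t ≠ 0 := by
  intro h0
  have := h.sq
  rw [h0, zero_pow two_ne_zero] at this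
  exact h.prime.ne_zero (by exact_mod_cast this.symm)

theorem norm_intCast (h : QuadSetting R s t p) (n : ℤ) : Algebra.norm ℤ (n : R) = n ^ 2 := by
  have := h.norm n
  rw [map_intCast s] at this
  have h2 : ((Algebra.norm ℤ (n : R) : ℤ) : R) = ((n ^ 2 : ℤ) : R) := by
    rw [this]; push_cast; ring
  exact_mod_cast h2

theorem norm_t (h : QuadSetting R s t p) : Algebra.norm ℤ t = -p := by
  have := h.norm t
  rw [h.conj] at this
  have h2 : ((Algebra.norm ℤ t : ℤ) : R) = ((-p : ℤ) : R) := by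
    rw [this]; push_cast; rw [← h.sq]; ring
  exact_mod_cast h2

theorem norm_conj (h : QuadSetting R s t p) (x : R) : Algebra.norm ℤ (s x) = Algebra.norm ℤ x := by
  have h1 := h.norm x
  have h2 := h.norm (s x)
  rw [h.invol, mul_comm, ← h1] at h2
  exact_mod_cast h2

theorem exists_trace (h : QuadSetting R s t p) (x : R) : ∃ a : ℤ, (a : R) = x + s x := by
  refine ⟨Algebra.norm ℤ (1 + x) - 1 - Algebra.norm ℤ x, ?_⟩
  push_cast
  rw [h.norm, h.norm, map_add, map_one]
  ring

theorem no_sq_add_sq {p : ℕ} (hp : p.Prime) (h3 : p % 4 = 3) (a m d : ℤ) (hd : d ≠ 0)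
    (H : a ^ 2 + m ^ 2 = p * d ^ 2) : False := by
  have hn : p * d.natAbs ^ 2 = a.natAbs ^ 2 + m.natAbs ^ 2 := by
    zify; simp only [sq_abs]; linarith
  have := (Nat.eq_sq_add_sq_iff (n := p * d.natAbs ^ 2)).1 ⟨_, _, hn⟩ p
    (by
      have : d.natAbs ≠ 0 := by simpa using hd
      simp [hp, hp.ne_zero, this]) h3
  have hd' : d.natAbs ≠ 0 := by simpa using hd
  have hfact := Fact.mk hp
  rw [padicValNat.mul hp.ne_zero (pow_ne_zero 2 hd'), padicValNat.pow,
    padicValNat_self] at this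
  exact (Nat.not_even_iff_odd.2 ⟨padicValNat p d.natAbs, by ring⟩) this

theorem norm_ne_neg (h : QuadSetting R s t p) (h3 : p % 4 = 3) (x y : R) (hy : y ≠ 0) :
    Algebra.norm ℤ x ≠ - Algebra.norm ℤ y := by
  intro hxy
  obtain ⟨a, ha⟩ := h.exists_trace (x * s y)
  obtain ⟨d, hd⟩ := h.exists_trace (x * s y * t)
  set m := Algebra.norm ℤ y with hm
  have hm0 : m ≠ 0 := by
    rw [hm]; exact Algebra.norm_ne_zero_iff.2 hy
  have hz : (x * s y) * s (x * s y) = ((-m ^ 2 : ℤ) : R) := by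
    rw [← h.norm, map_mul, h.norm_conj, hxy]; congr 1; ring
  have key : p * (a ^ 2 + (2 * m) ^ 2) = d ^ 2 := by
    have : ((p * (a ^ 2 + (2 * m) ^ 2) : ℤ) : R) = ((d ^ 2 : ℤ) : R) := by
      push_cast at hz ⊢
      rw [ha, hd, map_mul s _ t, h.conj, ← h.sq]
      linear_combination (4 * t^2) * hz
    exact_mod_cast this
  have hpd : (p : ℤ) ∣ d := (Nat.prime_iff_prime_int.1 h.prime).dvd_of_dvd_pow ⟨_, key.symm⟩
  obtain ⟨d', rfl⟩ := hpd
  have hp0 : (p : ℤ) ≠ 0 := by exact_mod_cast h.prime.ne_zero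
  have key2 : a ^ 2 + (2 * m) ^ 2 = p * d' ^ 2 := by
    apply mul_left_cancel₀ hp0
    rw [key]; ring
  refine no_sq_add_sq h.prime h3 a (2 * m) d' ?_ key2
  rintro rfl
  have : 0 < m ^ 2 := by positivity
  nlinarith [sq_nonneg a]

theorem map_map (h : QuadSetting R s t p) (I : Ideal R) : (I.map s).map s = I := by
  apply le_antisymm
  · rw [Ideal.map_le_iff_le_comap, Ideal.map_le_iff_le_comap]
    intro x hx
    rw [Ideal.mem_comap, Ideal.mem_comap, h.invol]
    exact hx
  · intro x hx
    have := Ideal.mem_map_of_mem s (Ideal.mem_map_of_mem s hx)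
    rwa [h.invol] at this

theorem map_span (I : R) : (Ideal.span {I}).map s = Ideal.span {s I} := by
  rw [Ideal.map_span, Set.image_singleton]

theorem absNorm_map (I : Ideal R) : Ideal.absNorm (I.map s) = Ideal.absNorm I := by
  rw [Ideal.absNorm_apply, Ideal.absNorm_apply, Submodule.cardQuot_apply,
    Submodule.cardQuot_apply]
  exact (Nat.card_congr (Ideal.quotientEquiv I (I.map s) s rfl).toEquiv).symm

theorem absNorm_natCast (h : QuadSetting R s t p) (n : ℕ) :
    Ideal.absNorm (Ideal.span {(n : R)}) = n ^ 2 := by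
  rw [Ideal.absNorm_span_natCast, h.rank]

theorem dvd_of_mem (h : QuadSetting R s t p) {P : Ideal R} {q : ℕ} (hq : q.Prime)
    (hP : q ∣ Ideal.absNorm P) (n : ℤ) (hn : (n : R) ∈ P) : (q : ℤ) ∣ n := by
  have := Ideal.absNorm_dvd_norm_of_mem hn
  rw [h.norm_intCast] at this
  exact (Nat.prime_iff_prime_int.1 hq).dvd_of_dvd_pow
    ((Int.natCast_dvd_natCast.2 hP).trans this)

theorem prime_cases (h : QuadSetting R s t p) (P : Ideal R) [hP : P.IsPrime] (hP0 : P ≠ ⊥) :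
    ∃ q : ℕ, q.Prime ∧ (P = Ideal.span {(q : R)} ∨
      (Ideal.absNorm P = q ∧ P * P.map s = Ideal.span {(q : R)})) := by
  have : P.IsMaximal := hP.isMaximal hP0
  obtain ⟨q, n, hn, hqP, hq, hPn⟩ := Ideal.exists_prime_and_absNorm_eq_pow P
  refine ⟨q, hq, ?_⟩
  obtain ⟨Q, hQ⟩ : P ∣ Ideal.span {(q : R)} :=
    Ideal.dvd_iff_le.2 ((Ideal.span_singleton_le_iff_mem _).2 hqP)
  have hN : q ^ n * Ideal.absNorm Q = q ^ 2 := by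
    rw [← hPn, ← map_mul, ← hQ, h.absNorm_natCast]
  have hle : n ≤ 2 := by
    have : q ^ n ∣ q ^ 2 := ⟨_, hN.symm⟩
    exact (Nat.pow_dvd_pow_iff_le_right hq.one_lt).1 this
  have : n = 1 ∨ n = 2 := by omega
  rcases this with rfl | rfl
  · right
    rw [pow_one] at hPn hN
    refine ⟨hPn, ?_⟩
    have hQn : Ideal.absNorm Q = q := by
      apply Nat.eq_of_mul_eq_mul_left hq.pos; rw [hN, pow_two]
    have hQp : Q.IsPrime := Ideal.isPrime_of_irreducible_absNorm (by rw [hQn]; exact hq)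
    have hQ0 : Q ≠ ⊥ := by
      rintro rfl
      rw [Ideal.absNorm_bot] at hQn
      exact hq.ne_zero hQn.symm
    have hqQ : (q : R) ∈ Q := by
      have : Ideal.span {(q : R)} ≤ Q := by rw [hQ]; exact Ideal.mul_le_right
      exact this (Ideal.mem_span_singleton_self _)
    have hsQ : (Q.map s).IsPrime := Ideal.map_isPrime_of_equiv s
    have hsub : P ≤ Q ∨ P ≤ Q.map s := by
      rw [← Ideal.subset_union]
      intro x hx
      have hNx : ((Algebra.norm ℤ x : ℤ) : R) ∈ P := by
        rw [h.norm]; exact P.mul_mem_right _ hx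
      obtain ⟨c, hc⟩ := h.dvd_of_mem hq (by rw [hPn]) _ hNx
      have : x * s x ∈ Q := by
        rw [← h.norm, hc]; push_cast
        exact Q.mul_mem_right _ hqQ
      rcases hQp.mem_or_mem this with h1 | h1
      · exact Or.inl h1
      · right
        have := Ideal.mem_map_of_mem s h1
        rwa [h.invol] at this
    rcases hsub with h1 | h1
    · have hPQ : P = Q := Ideal.IsMaximal.eq_of_le ‹_› hQp.ne_top h1
      subst hPQ
      have hm := congrArg (Ideal.map s) hQ
      rw [map_span, map_natCast, Ideal.map_mul, hQ] at hm
      have hle : P ≤ P.map s := by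
        rw [← Ideal.IsPrime.pow_le_iff (P := P.map s) two_ne_zero, pow_two, hm]
        exact Ideal.mul_le_left
      have : P = P.map s := Ideal.IsMaximal.eq_of_le ‹_› hsQ.ne_top hle
      rw [← this, hQ]
    · have hPQ : P = Q.map s := Ideal.IsMaximal.eq_of_le ‹_› hsQ.ne_top h1
      have : P.map s = Q := by rw [hPQ, h.map_map]
      rw [this, hQ]
  · left
    have : Ideal.absNorm Q = 1 := by
      have h0 : 0 < q ^ 2 := pow_pos hq.pos 2
      apply Nat.eq_of_mul_eq_mul_left h0; rw [hN, mul_one]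
    rw [Ideal.absNorm_eq_one_iff] at this
    rw [hQ, this, Ideal.mul_top]

theorem exists_mul_map (h : QuadSetting R s t p) (I : Ideal R) (hI : I ≠ ⊥) :
    ∃ n : ℕ, n ≠ 0 ∧ I * I.map s = Ideal.span {(n : R)} := by
  induction I using UniqueFactorizationMonoid.induction_on_prime with
  | h₁ => exact absurd rfl hI
  | h₂ I hu =>
    rw [Ideal.isUnit_iff] at hu
    subst hu
    exact ⟨1, one_ne_zero, by simp [Ideal.map_top]⟩
  | h₃ I P hI0 hP ih =>
    obtain ⟨n, hn, hn'⟩ := ih hI0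
    have hP0 : P ≠ ⊥ := hP.ne_zero
    have : P.IsPrime := Ideal.isPrime_of_prime hP
    obtain ⟨q, hq, hc⟩ := h.prime_cases P hP0
    have : ∃ m : ℕ, m ≠ 0 ∧ P * P.map s = Ideal.span {(m : R)} := by
      rcases hc with hc | hc
      · refine ⟨q * q, mul_ne_zero hq.ne_zero hq.ne_zero, ?_⟩
        rw [hc, map_span, map_natCast, Ideal.span_singleton_mul_span_singleton]
        push_cast; rfl
      · exact ⟨q, hq.ne_zero, hc.2⟩
    obtain ⟨m, hm, hm'⟩ := this
    refine ⟨m * n, mul_ne_zero hm hn, ?_⟩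
    rw [Ideal.map_mul, mul_mul_mul_comm, hm', hn', Ideal.span_singleton_mul_span_singleton]
    push_cast; rfl

theorem sub_mem (P : Ideal R) {q : ℕ} (hq : q.Prime) (hP : Ideal.absNorm P = q)
    (hs : P.map s = P) (x : R) : x - s x ∈ P := by
  have hc : Nat.card (R ⧸ P) = q := by
    rw [← hP, Ideal.absNorm_apply, Submodule.cardQuot_apply]
  have : Fact (Nat.Prime (Nat.card (R ⧸ P))) := ⟨by rw [hc]; exact hq⟩
  have hmem : ∃ n : ℤ, x - n ∈ P := by
    rcases AddSubgroup.eq_bot_or_eq_top_of_prime_card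
      ((Int.castRingHom (R ⧸ P)).toAddMonoidHom.range) with h1 | h1
    · exfalso
      have : (1 : R ⧸ P) ∈ (Int.castRingHom (R ⧸ P)).toAddMonoidHom.range := ⟨1, by simp⟩
      rw [h1, AddSubgroup.mem_bot] at this
      have : P = ⊤ := by
        rw [Ideal.eq_top_iff_one]
        exact Ideal.Quotient.eq_zero_iff_mem.1 this
      rw [this, Ideal.absNorm_top] at hP
      exact hq.one_lt.ne hP
    · have : Ideal.Quotient.mk P x ∈ (Int.castRingHom (R ⧸ P)).toAddMonoidHom.range := by
        rw [h1]; trivial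
      obtain ⟨n, hn⟩ := this
      refine ⟨n, Ideal.Quotient.eq.1 ?_⟩
      rw [← hn]; simp
  obtain ⟨n, hn⟩ := hmem
  have h2 := Ideal.mem_map_of_mem s hn
  rw [hs, map_sub, map_intCast] at h2
  have := P.sub_mem hn h2
  convert this using 1; ring

theorem inv_prime (h : QuadSetting R s t p) (P : Ideal R) [hP : P.IsPrime] (hP0 : P ≠ ⊥)
    (hs : P.map s = P) :
    (∃ q : ℕ, q ≠ 0 ∧ P = Ideal.span {(q : R)}) ∨ P = Ideal.span {t} ∨
      (p % 4 = 3 ∧ P * P = Ideal.span {2}) := by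
  obtain ⟨q, hq, h1 | ⟨h1, h2⟩⟩ := h.prime_cases P hP0
  · exact Or.inl ⟨q, hq.ne_zero, h1⟩
  right
  rw [hs] at h2
  have hsub := fun x => sub_mem P hq h1 hs x
  have ht := hsub t
  rw [h.conj] at ht
  have h4 : ((4 * p : ℤ) : R) ∈ P := by
    have := P.mul_mem_left (t - -t) ht
    convert this using 1
    push_cast; rw [← h.sq]; ring
  have h5 := h.dvd_of_mem hq (by rw [h1]) _ h4
  have h6 : q ∣ 2 ^ 2 * p := by exact_mod_cast h5
  by_cases hqp : q = p
  · left
    subst hqp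
    have htP : t ∈ P := by
      apply hP.mem_of_pow_mem 2
      rw [h.sq]
      have : (q : R) ∈ P * P := by rw [h2]; exact Ideal.mem_span_singleton_self _
      exact Ideal.mul_le_left this
    obtain ⟨Q, hQ⟩ : P ∣ Ideal.span {t} :=
      Ideal.dvd_iff_le.2 ((Ideal.span_singleton_le_iff_mem _).2 htP)
    have hN := congrArg Ideal.absNorm hQ
    rw [map_mul, Ideal.absNorm_span_singleton, h.norm_t, h1] at hN
    have : Ideal.absNorm Q = 1 := by
      apply Nat.eq_of_mul_eq_mul_left hq.pos; rw [← hN]; simp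
    rw [Ideal.absNorm_eq_one_iff] at this
    rw [hQ, this, Ideal.mul_top]
  · right
    have hq2 : q = 2 := by
      rcases hq.dvd_mul.1 h6 with h7 | h7
      · exact (Nat.prime_dvd_prime_iff_eq hq Nat.prime_two).1 (hq.dvd_of_dvd_pow h7)
      · exact absurd ((Nat.prime_dvd_prime_iff_eq hq h.prime).1 h7) hqp
    subst hq2
    refine ⟨?_, by simpa using h2⟩
    have hodd : p % 2 = 1 := by
      rcases h.prime.eq_two_or_odd with h8 | h8
      · exact absurd h8.symm hqp
      · exact h8
    by_contra h9
    obtain ⟨w, hw⟩ := h.half (by omega)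
    have h10 := hsub w
    have h2P : (2 : R) ∈ P := by
      have : (2 : R) ∈ P * P := by rw [h2]; exact Ideal.mem_span_singleton_self _
      exact Ideal.mul_le_left this
    apply hP.ne_top
    rw [Ideal.eq_top_iff_one]
    have := P.sub_mem (P.mul_mem_right w h2P) h10
    convert this using 1
    rw [← hw]; ring

theorem inv_ideal (h : QuadSetting R s t p) (J : Ideal R) (hJ0 : J ≠ ⊥) (hs : J.map s = J) :
    ∃ n i : ℕ, n ≠ 0 ∧ (J = Ideal.span {(n : R) * t ^ i} ∨
      (p % 4 = 3 ∧ ∃ Q : Ideal R, Q.IsPrime ∧ Q * Q = Ideal.span {2} ∧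
        J = Ideal.span {(n : R) * t ^ i} * Q)) := by
  induction hk : Ideal.absNorm J using Nat.strong_induction_on generalizing J with
  | _ k ih =>
  by_cases hJ : J = ⊤
  · refine ⟨1, 0, one_ne_zero, Or.inl ?_⟩
    simp [hJ]
  obtain ⟨P, hPm, hJP⟩ := Ideal.exists_le_maximal J hJ
  have hPp : P.IsPrime := hPm.isPrime
  have hP0 : P ≠ ⊥ := by
    rintro rfl
    exact hJ0 (le_bot_iff.1 hJP)
  obtain ⟨J', rfl⟩ := Ideal.dvd_iff_le.2 hJP
  have hP1 : Ideal.absNorm P ≠ 1 := by rw [Ne, Ideal.absNorm_eq_one_iff]; exact hPm.ne_top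
  have hPN0 : Ideal.absNorm P ≠ 0 := by rw [Ne, Ideal.absNorm_eq_zero_iff]; exact hP0
  have hJ'0 : J' ≠ ⊥ := by rintro rfl; simp at hJ0
  by_cases hsP : P.map s = P
  · have hsJ' : J'.map s = J' := by
      rw [Ideal.map_mul, hsP] at hs
      exact mul_left_cancel₀ hP0 hs
    have hlt : Ideal.absNorm J' < k := by
      rw [← hk, map_mul]
      have : Ideal.absNorm J' ≠ 0 := by rw [Ne, Ideal.absNorm_eq_zero_iff]; exact hJ'0
      have h2 : 2 ≤ Ideal.absNorm P := by omega
      nlinarith [Nat.pos_of_ne_zero this]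
    obtain ⟨n, i, hn, hc⟩ := ih _ hlt J' hJ'0 hsJ' rfl
    rcases h.inv_prime P hP0 hsP with ⟨q, hq0, hq⟩ | hq | ⟨h3, hq⟩
    · refine ⟨q * n, i, mul_ne_zero hq0 hn, ?_⟩
      have : P * Ideal.span {(n : R) * t ^ i} = Ideal.span {((q * n : ℕ) : R) * t ^ i} := by
        rw [hq, Ideal.span_singleton_mul_span_singleton]; push_cast; rw [mul_assoc]
      rw [← this]
      rcases hc with hc | ⟨h3, Q, hQ1, hQ2, hc⟩
      · exact Or.inl (by rw [hc])
      · exact Or.inr ⟨h3, Q, hQ1, hQ2, by rw [hc, mul_assoc]⟩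
    · refine ⟨n, i + 1, hn, ?_⟩
      have : P * Ideal.span {(n : R) * t ^ i} = Ideal.span {(n : R) * t ^ (i + 1)} := by
        rw [hq, Ideal.span_singleton_mul_span_singleton]; congr 2; ring
      rw [← this]
      rcases hc with hc | ⟨h3, Q, hQ1, hQ2, hc⟩
      · exact Or.inl (by rw [hc])
      · exact Or.inr ⟨h3, Q, hQ1, hQ2, by rw [hc, mul_assoc]⟩
    · rcases hc with hc | ⟨h3, Q, hQ1, hQ2, hc⟩
      · exact ⟨n, i, hn, Or.inr ⟨h3, P, hPp, hq, by rw [hc, mul_comm]⟩⟩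
      · have hPQ : P = Q := by
          refine Ideal.IsMaximal.eq_of_le hPm hQ1.ne_top ?_
          rw [← Ideal.IsPrime.pow_le_iff (P := Q) two_ne_zero, pow_two, hq, ← hQ2]
          exact Ideal.mul_le_left
        subst hPQ
        refine ⟨2 * n, i, mul_ne_zero two_ne_zero hn, Or.inl ?_⟩
        rw [hc, mul_comm (Ideal.span _) P, ← mul_assoc, hq,
          Ideal.span_singleton_mul_span_singleton]
        push_cast; rw [mul_assoc]
  · have hsPp : (P.map s).IsPrime := Ideal.map_isPrime_of_equiv s
    have hsP0 : P.map s ≠ ⊥ := by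
      intro h0
      have := h.map_map P
      rw [h0, Ideal.map_bot] at this
      exact hP0 this.symm
    have hdvd : P.map s ∣ P * J' := by
      rw [← hs, Ideal.map_mul]; exact dvd_mul_right _ _
    rcases (Ideal.prime_of_isPrime hsP0 hsPp).dvd_or_dvd hdvd with h1 | h1
    · exact absurd (Ideal.IsMaximal.eq_of_le hPm hsPp.ne_top (Ideal.dvd_iff_le.1 h1)).symm hsP
    obtain ⟨L, rfl⟩ := h1
    have hL0 : L ≠ ⊥ := by rintro rfl; simp at hJ'0
    obtain ⟨m, hm, hm'⟩ := h.exists_mul_map P hP0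
    have hsL : L.map s = L := by
      rw [Ideal.map_mul, Ideal.map_mul, h.map_map, ← mul_assoc, ← mul_assoc,
        mul_comm (P.map s) P] at hs
      exact mul_left_cancel₀ (mul_ne_zero hP0 hsP0) hs
    have hlt : Ideal.absNorm L < k := by
      rw [← hk, map_mul, map_mul, absNorm_map]
      have : Ideal.absNorm L ≠ 0 := by rw [Ne, Ideal.absNorm_eq_zero_iff]; exact hL0
      have h2 : 2 ≤ Ideal.absNorm P := by omega
      have h3 : 0 < Ideal.absNorm L := Nat.pos_of_ne_zero this
      have h4 : Ideal.absNorm L < Ideal.absNorm P * Ideal.absNorm L := by nlinarith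
      nlinarith
    obtain ⟨n, i, hn, hc⟩ := ih _ hlt L hL0 hsL rfl
    refine ⟨m * n, i, mul_ne_zero hm hn, ?_⟩
    have : P * P.map s * Ideal.span {(n : R) * t ^ i} = Ideal.span {((m * n : ℕ) : R) * t ^ i} := by
      rw [hm', Ideal.span_singleton_mul_span_singleton]; push_cast; rw [mul_assoc]
    rw [← this]
    rcases hc with hc | ⟨h3, Q, hQ1, hQ2, hc⟩
    · exact Or.inl (by rw [hc, mul_assoc])
    · exact Or.inr ⟨h3, Q, hQ1, hQ2, by rw [hc]; simp only [mul_assoc]⟩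

theorem nt_ne_zero (h : QuadSetting R s t p) {n : ℕ} (hn : n ≠ 0) (i : ℕ) :
    (n : R) * t ^ i ≠ 0 :=
  mul_ne_zero (by exact_mod_cast hn) (pow_ne_zero _ h.t_ne_zero)

/-- If a unit that is not plus or minus a square has norm one, then `p ≡ 3 mod 4` and the
ramified prime above two is principal. -/
theorem of_norm_one (h : QuadSetting R s t p) (e : Rˣ)
    (he : ∀ u : Rˣ, e ≠ u ^ 2 ∧ e ≠ -u ^ 2)
    (hN : (e : R) * s e = 1) :
    p % 4 = 3 ∧ ∃ Q : Ideal R, Q.IsPrime ∧ Q * Q = Ideal.span {2} ∧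
      ∃ x : R, Q = Ideal.span {x} := by
  have hb0 : (1 + e : R) ≠ 0 := by
    intro h0
    apply (he 1).2
    ext
    push_cast
    linear_combination h0
  have hb : (1 + e : R) = e * s (1 + e) := by
    rw [map_add, map_one]; linear_combination -hN
  have hinv : (Ideal.span {(1 + e : R)}).map s = Ideal.span {(1 + e : R)} := by
    rw [map_span, Ideal.span_singleton_eq_span_singleton]
    exact ⟨e, by rw [mul_comm]; exact hb.symm⟩
  obtain ⟨n, i, hn, hc⟩ := h.inv_ideal _ (by simpa using hb0) hinv
  have hc0 := h.nt_ne_zero hn i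
  rcases hc with hc | ⟨h3, Q, hQ1, hQ2, hc⟩
  · exfalso
    rw [Ideal.span_singleton_eq_span_singleton] at hc
    obtain ⟨u, hu⟩ := hc.symm
    -- `1 + e = n t^i u`
    have hs1 : s (1 + e) = (n : R) * ((-1) ^ i * t ^ i) * s u := by
      rw [← hu, map_mul, map_mul, map_natCast, map_pow, h.conj, neg_pow]
    have hE : (u : R) = e * ((-1) ^ i * s u) := by
      apply mul_left_cancel₀ hc0
      rw [hu]
      conv_lhs => rw [hb, hs1]
      ring
    have hNu : ((Algebra.norm ℤ (u : R) : ℤ) : R) = u * s u := h.norm _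
    have hun : IsUnit (Algebra.norm ℤ (u : R)) := u.isUnit.map (Algebra.norm ℤ)
    have hsq : (u : R) ^ 2 = e * ((-1) ^ i * ((Algebra.norm ℤ (u : R) : ℤ) : R)) := by
      rw [hNu]; linear_combination (u : R) * hE
    have hpm : (u : R) ^ 2 = e ∨ (u : R) ^ 2 = -e := by
      rcases Int.isUnit_iff.1 hun with h1 | h1 <;> rw [h1] at hsq <;>
        rcases neg_one_pow_eq_or R i with h2 | h2 <;> rw [h2] at hsq <;>
        push_cast at hsq <;> simp at hsq <;> simp [hsq]
    rcases hpm with h1 | h1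
    · exact (he u).1 (by ext; push_cast; exact h1.symm)
    · exact (he u).2 (by ext; push_cast; rw [h1]; ring)
  · refine ⟨h3, Q, hQ1, hQ2, ?_⟩
    have : (1 + e : R) ∈ Ideal.span {(n : R) * t ^ i} * Q := by
      rw [← hc]; exact Ideal.mem_span_singleton_self _
    obtain ⟨x, hx, hx'⟩ := Ideal.mem_span_singleton_mul.1 this
    refine ⟨x, ?_⟩
    apply mul_left_cancel₀ (a := Ideal.span {(n : R) * t ^ i}) (by simpa using hc0)
    rw [← hc, Ideal.span_singleton_mul_span_singleton, hx']

theorem inv_principal (h : QuadSetting R s t p) (J : Ideal R) (hJ0 : J ≠ ⊥) (hs : J.map s = J) :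
    ∃ x : R, J = Ideal.span {x} := by
  obtain ⟨n, i, hn, hc | ⟨h3, Q, hQ1, hQ2, hc⟩⟩ := h.inv_ideal J hJ0 hs
  · exact ⟨_, hc⟩
  obtain ⟨e, he⟩ := h.unit
  have hN : (e : R) * s e = 1 := by
    rw [← h.norm]
    rcases Int.isUnit_iff.1 (e.isUnit.map (Algebra.norm ℤ)) with h1 | h1
    · rw [h1]; simp
    · exact absurd (by rw [h1]; simp) (h.norm_ne_neg h3 (e : R) 1 one_ne_zero)
  obtain ⟨-, Q', hQ1', hQ2', x, hx⟩ := h.of_norm_one e he hN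
  have hQQ : Q = Q' := by
    apply le_antisymm
    · rw [← Ideal.IsPrime.pow_le_iff (P := Q') two_ne_zero, pow_two, hQ2, ← hQ2']
      exact Ideal.mul_le_left
    · rw [← Ideal.IsPrime.pow_le_iff (P := Q) two_ne_zero, pow_two, hQ2', ← hQ2]
      exact Ideal.mul_le_left
  exact ⟨_, by rw [hc, hQQ, hx, Ideal.span_singleton_mul_span_singleton]⟩

theorem principal_of_norm_eq (h : QuadSetting R s t p) (I : Ideal R) (hI : I ≠ ⊥) (x y : R)
    (hx : x ≠ 0) (hxy : Ideal.span {x} * I = Ideal.span {y} * I.map s)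
    (hN : x * s x = y * s y) : ∃ c z : R, c ≠ 0 ∧ Ideal.span {c} * I = Ideal.span {z} := by
  have : ∃ c : R, c ≠ 0 ∧ y * c = x * s c := by
    by_cases hc : x + s y = 0
    · refine ⟨t * x, mul_ne_zero h.t_ne_zero hx, ?_⟩
      rw [map_mul, h.conj]
      have h1 := congrArg s hc
      rw [map_add, h.invol, map_zero] at h1
      linear_combination t * x * h1
    · refine ⟨x + s y, hc, ?_⟩
      rw [map_add, h.invol]
      linear_combination -hN
  obtain ⟨c, hc, hyc⟩ := this
  obtain ⟨z, hz⟩ := h.inv_principal (Ideal.span {c} * I)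
    (mul_ne_zero (by simpa using hc) hI) (by
      rw [Ideal.map_mul, map_span]
      apply mul_left_cancel₀ (a := Ideal.span {x}) (by simpa using hx)
      rw [← mul_assoc, Ideal.span_singleton_mul_span_singleton, ← hyc,
        mul_left_comm, hxy, ← mul_assoc, Ideal.span_singleton_mul_span_singleton, mul_comm y c])
  exact ⟨c, z, hc, hz⟩

theorem principal_of_conj (h : QuadSetting R s t p) (I : Ideal R) (hI : I ≠ ⊥) (x y : R)
    (hx : x ≠ 0) (hy : y ≠ 0) (hxy : Ideal.span {x} * I = Ideal.span {y} * I.map s) :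
    ∃ c z : R, c ≠ 0 ∧ Ideal.span {c} * I = Ideal.span {z} := by
  have hN := congrArg Ideal.absNorm hxy
  rw [map_mul, map_mul, absNorm_map, Ideal.absNorm_span_singleton,
    Ideal.absNorm_span_singleton] at hN
  have hI' : Ideal.absNorm I ≠ 0 := by rw [Ne, Ideal.absNorm_eq_zero_iff]; exact hI
  have hN2 := Nat.eq_of_mul_eq_mul_right (Nat.pos_of_ne_zero hI') hN
  rcases Int.natAbs_eq_natAbs_iff.1 hN2 with h1 | h1
  · exact h.principal_of_norm_eq I hI x y hx hxy (by rw [← h.norm, ← h.norm, h1])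
  · obtain ⟨e, he⟩ := h.unit
    have h3 : p % 4 ≠ 3 := fun h3 => h.norm_ne_neg h3 x y hy h1
    have hNe : Algebra.norm ℤ (e : R) = -1 := by
      rcases Int.isUnit_iff.1 (e.isUnit.map (Algebra.norm ℤ)) with h2 | h2
      · exact absurd (h.of_norm_one e he (by rw [← h.norm, h2]; simp)).1 h3
      · exact h2
    refine h.principal_of_norm_eq I hI x (y * e) hx ?_ ?_
    · rw [hxy]
      congr 1
      rw [Ideal.span_singleton_eq_span_singleton]
      exact ⟨e, rfl⟩
    · rw [← h.norm, ← h.norm, map_mul, hNe, h1]; simp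

theorem odd_card (h : QuadSetting R s t p) [Fintype (ClassGroup R)] :
    Odd (Fintype.card (ClassGroup R)) := by
  rw [← Nat.not_even_iff_odd, even_iff_two_dvd]
  intro h2
  have : Fact (Nat.Prime 2) := ⟨Nat.prime_two⟩
  obtain ⟨g, hg⟩ := exists_prime_orderOf_dvd_card 2 h2
  obtain ⟨⟨I, hI⟩, rfl⟩ := ClassGroup.mk0_surjective g
  have hI0 : I ≠ ⊥ := mem_nonZeroDivisors_iff_ne_zero.1 hI
  have hsI0 : I.map s ≠ ⊥ := by
    intro h0
    have := h.map_map I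
    rw [h0, Ideal.map_bot] at this
    exact hI0 this.symm
  have hsI : I.map s ∈ nonZeroDivisors (Ideal R) := mem_nonZeroDivisors_iff_ne_zero.2 hsI0
  obtain ⟨n, hn, hn'⟩ := h.exists_mul_map I hI0
  have hinv : ClassGroup.mk0 ⟨I, hI⟩ = (ClassGroup.mk0 ⟨I.map s, hsI⟩)⁻¹ :=
    ClassGroup.mk0_eq_mk0_inv_iff.2 ⟨n, by exact_mod_cast hn, hn'⟩
  have hsq : (ClassGroup.mk0 ⟨I, hI⟩ : ClassGroup R) ^ 2 = 1 := by
    rw [← hg]; exact pow_orderOf_eq_one _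
  have heq : ClassGroup.mk0 ⟨I, hI⟩ = ClassGroup.mk0 ⟨I.map s, hsI⟩ := by
    rw [← inv_inj, ← hinv, inv_eq_iff_mul_eq_one, ← pow_two, hsq]
  obtain ⟨x, y, hx, hy, hxy⟩ := ClassGroup.mk0_eq_mk0_iff.1 heq
  obtain ⟨c, z, hc, hcz⟩ := h.principal_of_conj I hI0 x y hx hy hxy
  have hz : z ≠ 0 := by
    rintro rfl
    have : Ideal.span {c} * I ≠ ⊥ := mul_ne_zero (by simpa using hc) hI0
    exact this (by rw [hcz]; simp)
  have h1 : ClassGroup.mk0 ⟨I, hI⟩ = ClassGroup.mk0 (1 : nonZeroDivisors (Ideal R)) :=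
    ClassGroup.mk0_eq_mk0_iff.2 ⟨c, z, hc, hz, by simpa using hcz⟩
  rw [map_one] at h1
  rw [h1, orderOf_one] at hg
  exact absurd hg (by norm_num)

end QuadSetting

theorem theta_irrational {p : ℕ} (hp : p.Prime) {K : Type*} [Field K] [NumberField K]
    {θ : K} (hθ : θ ^ 2 = (p : K)) (r : ℚ) : (algebraMap ℚ K r) ≠ θ := by
  rintro rfl
  have : r ^ 2 = (p : ℚ) := by
    have : (algebraMap ℚ K (r ^ 2)) = algebraMap ℚ K (p : ℚ) := by
      rw [map_pow, hθ, map_natCast]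
    exact (algebraMap ℚ K).injective this
  have h1 : IsSquare ((p : ℕ) : ℚ) := ⟨r, by rw [← this, pow_two]⟩
  rw [Rat.isSquare_natCast_iff] at h1
  exact hp.prime.not_isSquare h1

theorem hom_ext_theta {p : ℕ} (hp : p.Prime) {K : Type*} [Field K] [NumberField K]
    (h2 : Module.finrank ℚ K = 2) {θ : K} (hθ : θ ^ 2 = (p : K)) {L : Type*} [Field L]
    [CharZero L] (f g : K →+* L) (hfg : f θ = g θ) : f = g := by
  have := IntermediateField.isSimpleOrder_of_finrank_prime ℚ K (by rw [h2]; exact Nat.prime_two)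
  let E : IntermediateField ℚ K := (RingHom.eqLocusField f g).toIntermediateField (by
    intro r
    change f _ = g _
    simp)
  have hE : E = ⊤ := by
    rcases eq_bot_or_eq_top E with h | h
    · exfalso
      have hm : θ ∈ E := hfg
      rw [h, IntermediateField.mem_bot] at hm
      obtain ⟨r, hr⟩ := hm
      exact theta_irrational hp hθ r hr
    · exact h
  ext x
  have : x ∈ E := by rw [hE]; trivial
  exact this

theorem exists_unit {p : ℕ} (hp : p.Prime) {K : Type*} [Field K] [NumberField K]
    (h2 : Module.finrank ℚ K = 2) {θ : K} (hθ : θ ^ 2 = (p : K)) :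
    ∃ e : (𝓞 K)ˣ, ∀ u : (𝓞 K)ˣ, e ≠ u ^ 2 ∧ e ≠ -u ^ 2 := by
  have hreal : ∀ v : InfinitePlace K, v.IsReal := by
    intro v
    rw [InfinitePlace.isReal_iff, ComplexEmbedding.isReal_iff]
    apply hom_ext_theta hp h2 hθ
    rw [ComplexEmbedding.conjugate_coe_eq]
    have h3 : (v.embedding θ) ^ 2 = ((Real.sqrt p : ℝ) : ℂ) ^ 2 := by
      rw [← map_pow, hθ, map_natCast, ← Complex.ofReal_pow, Real.sq_sqrt (by positivity)]
      simp
    rcases sq_eq_sq_iff_eq_or_eq_neg.1 h3 with h4 | h4 <;> rw [h4] <;> simp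
  have hc : InfinitePlace.nrComplexPlaces K = 0 := by
    exact nrComplexPlaces_eq_zero_iff.2 ⟨hreal⟩
  have hr : 0 < Units.rank K := by
    have h1 := InfinitePlace.card_add_two_mul_card_eq_rank K
    have h3 := InfinitePlace.card_eq_nrRealPlaces_add_nrComplexPlaces K
    rw [Units.rank, h3]
    omega
  let i : Fin (Units.rank K) := ⟨0, hr⟩
  refine ⟨Units.fundSystem K i, fun u => ?_⟩
  have key : ∀ z ∈ Units.torsion K, Units.fundSystem K i ≠ z * u ^ 2 := by
    intro z hz h
    obtain ⟨⟨ζ, f⟩, hf, -⟩ := Units.exist_unique_eq_mul_prod K u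
    obtain ⟨w, -, hw⟩ := Units.exist_unique_eq_mul_prod K (Units.fundSystem K i)
    have h1 := hw ⟨1, Pi.single i 1⟩ (by
      simp only [OneMemClass.coe_one, one_mul]
      rw [Finset.prod_eq_single i]
      · simp
      · intro j _ hj; simp [hj]
      · simp)
    have h3 := hw ⟨⟨z, hz⟩ * ζ ^ 2, 2 * f⟩ (by
      have hf' : u ^ 2 = (ζ * ∏ j, Units.fundSystem K j ^ f j) ^ 2 := congrArg (· ^ 2) hf
      dsimp only
      rw [h, hf']
      simp only [Subgroup.coe_mul, Subgroup.coe_pow, mul_pow, mul_assoc]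
      rw [← Finset.prod_pow]
      congr 3
      ext j
      simp [two_mul, zpow_add, pow_two])
    have h4 := congrFun (congrArg Prod.snd (h1.trans h3.symm)) i
    simp at h4
    omega
  constructor
  · intro h
    exact key 1 (one_mem _) (by rw [h, one_mul])
  · intro h
    refine key (-1) ?_ (by rw [h, neg_one_mul])
    rw [Units.torsion, CommGroup.mem_torsion, isOfFinOrder_iff_pow_eq_one]
    exact ⟨2, by norm_num, by simp⟩

theorem exists_sigma {p : ℕ} (hp : p.Prime) {K : Type*} [Field K] [NumberField K]
    (h2 : Module.finrank ℚ K = 2) {θ : K} (hθ : θ ^ 2 = (p : K)) :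
    ∃ σ : K ≃ₐ[ℚ] K, σ θ = -θ ∧ (∀ x, σ (σ x) = x) ∧
      ∀ x, algebraMap ℚ K (Algebra.norm ℚ x) = x * σ x := by
  classical
  have : Algebra.IsQuadraticExtension ℚ K := ⟨h2⟩
  have : IsGalois ℚ K := inferInstance
  have hcard : Fintype.card (K ≃ₐ[ℚ] K) = 2 := by
    rw [← Nat.card_eq_fintype_card, IsGalois.card_aut_eq_finrank, h2]
  obtain ⟨σ, hσ⟩ : ∃ σ : K ≃ₐ[ℚ] K, σ ≠ 1 := by
    have : Nontrivial (K ≃ₐ[ℚ] K) := Fintype.one_lt_card_iff_nontrivial.1 (by omega)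
    exact exists_ne 1
  have hσθ : σ θ = -θ := by
    have h3 : (σ θ) ^ 2 = θ ^ 2 := by rw [← map_pow, hθ, map_natCast]
    rcases sq_eq_sq_iff_eq_or_eq_neg.1 h3 with h4 | h4
    · exfalso
      apply hσ
      have := hom_ext_theta hp h2 hθ (σ : K →+* K) (RingHom.id K) h4
      ext x
      exact congrArg (fun f : K →+* K => f x) this
    · exact h4
  have huniv : (Finset.univ : Finset (K ≃ₐ[ℚ] K)) = {1, σ} := by
    symm
    apply Finset.eq_univ_of_card
    rw [hcard, Finset.card_pair hσ.symm]
  refine ⟨σ, hσθ, fun x => ?_, fun x => ?_⟩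
  · have := hom_ext_theta hp h2 hθ ((σ : K →+* K).comp (σ : K →+* K)) (RingHom.id K)
      (by simp [hσθ])
    exact congrArg (fun f : K →+* K => f x) this
  · rw [Algebra.norm_eq_prod_automorphisms, huniv, Finset.prod_pair hσ.symm]
    rfl

theorem quadSetting_of_field {p : ℕ} (hp : p.Prime) {K : Type*} [Field K] [NumberField K]
    (h2 : Module.finrank ℚ K = 2) {θ : K} (hθ : θ ^ 2 = (p : K)) :
    ∃ (s : 𝓞 K ≃+* 𝓞 K) (t : 𝓞 K), QuadSetting (𝓞 K) s t p := by
  obtain ⟨σ, h1, h3, h4⟩ := exists_sigma hp h2 hθ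
  have hθint : IsIntegral ℤ θ := by
    apply IsIntegral.of_pow (n := 2) (by norm_num)
    rw [hθ, ← map_natCast (algebraMap ℤ K)]
    exact isIntegral_algebraMap
  obtain ⟨t, ht⟩ : ∃ t : 𝓞 K, algebraMap (𝓞 K) K t = θ := ⟨⟨θ, hθint⟩, rfl⟩
  have hs : ∃ s : 𝓞 K ≃+* 𝓞 K, ∀ x : 𝓞 K, algebraMap (𝓞 K) K (s x) = σ (algebraMap (𝓞 K) K x) :=
    ⟨RingOfIntegers.mapRingEquiv σ.toRingEquiv, fun x => rfl⟩
  obtain ⟨s, hs⟩ := hs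
  have hinj : ∀ {x y : 𝓞 K}, algebraMap (𝓞 K) K x = algebraMap (𝓞 K) K y → x = y :=
    fun {x y} h => RingOfIntegers.ext h
  refine ⟨s, t, hp, ?_, ?_, ?_, ?_, ?_, ?_, exists_unit hp h2 hθ⟩
  · intro x
    apply hinj
    rw [hs, hs, h3]
  · intro x
    apply hinj
    have h5 := h4 (algebraMap (𝓞 K) K x)
    have h6 : ((Algebra.norm ℤ x : ℤ) : ℚ) = Algebra.norm ℚ (algebraMap (𝓞 K) K x) :=
      Algebra.coe_norm_int x
    rw [← h6] at h5
    rw [map_mul, hs, ← h5]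
    simp
  · apply hinj
    rw [map_pow, map_natCast, ht, hθ]
  · apply hinj
    rw [hs, map_neg, ht, h1]
  · rw [RingOfIntegers.rank, h2]
  · intro h5
    obtain ⟨k, hk⟩ : ∃ k : ℕ, p = 4 * k + 1 := ⟨p / 4, by omega⟩
    have hw : IsIntegral ℤ ((1 + θ) / 2) := by
      refine ⟨Polynomial.X ^ 2 - (Polynomial.X + Polynomial.C (k : ℤ)), ?_, ?_⟩
      · apply Polynomial.monic_X_pow_sub
        compute_degree!
      · simp
        rw [hk] at hθ
        push_cast at hθ
        field_simp
        linear_combination hθ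
    obtain ⟨w, hw'⟩ : ∃ w : 𝓞 K, algebraMap (𝓞 K) K w = (1 + θ) / 2 := ⟨⟨_, hw⟩, rfl⟩
    refine ⟨w, ?_⟩
    apply hinj
    rw [map_add, hs, map_one, hw', map_div₀, map_add, map_one, h1, map_ofNat]
    ring

/-- For a prime `p`, the class number of `ℚ(√p)` is odd. -/
theorem classNumber_real_quadratic_sqrt_prime_odd
    (p : ℕ) (hp : p.Prime)
    (K : Type*) [Field K] [NumberField K]
    (h2 : Module.finrank ℚ K = 2) (θ : K) (hθ : θ ^ 2 = (p : K)) :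
    Odd (NumberField.classNumber K) := by
  obtain ⟨s, t, h⟩ := quadSetting_of_field hp h2 hθ
  exact h.odd_card
end

section
/- Let p be prime and F = ℚ(√p). The quotient Pic⁺(O_F)/Pic⁺(O_F)² of the narrow class group by its subgroup of squares has order 1 if p = 2 or p ≡ 1 (mod 4), and order 2 if p ≡ 3 (mod 4). -/
open NumberField

/-- The subgroup of invertible fractional ideals generated by (equivalently,
consisting of) principal fractional ideals with a totally positive generator. -/
noncomputable def totPosPrincipal (K : Type*) [Field K] [NumberField K] :
    Subgroup (FractionalIdeal (nonZeroDivisors (𝓞 K)) K)ˣ :=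
  Subgroup.closure {I : (FractionalIdeal (nonZeroDivisors (𝓞 K)) K)ˣ |
    ∃ a : K, (∀ φ : K →+* ℝ, 0 < φ a) ∧
      (I : FractionalIdeal (nonZeroDivisors (𝓞 K)) K) =
        FractionalIdeal.spanSingleton (nonZeroDivisors (𝓞 K)) a}

/-- The narrow class group `Pic⁺(O_K)`. -/
noncomputable def narrowClassGroup (K : Type*) [Field K] [NumberField K] :=
  (FractionalIdeal (nonZeroDivisors (𝓞 K)) K)ˣ ⧸ totPosPrincipal K

noncomputable instance (K : Type*) [Field K] [NumberField K] :
    CommGroup (narrowClassGroup K) :=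
  QuotientGroup.Quotient.commGroup (totPosPrincipal K)











lemma pell_aux {p : ℕ} (hp : p.Prime) {a b c : ℤ} (hab : IsCoprime a b) (ha : 0 ≤ a) (hb : 0 ≤ b)
    (h : a * b = p * c ^ 2) : ∃ u v : ℤ, (a = u ^ 2 ∧ b = p * v ^ 2) ∨ (a = p * v ^ 2 ∧ b = u ^ 2) := by
  have hpp : Prime (p : ℤ) := Nat.prime_iff_prime_int.mp hp
  have hp0 : (p : ℤ) ≠ 0 := hpp.ne_zero
  have hpos : (0 : ℤ) < p := by exact_mod_cast hp.pos
  have key : ∀ a b : ℤ, IsCoprime a b → 0 ≤ a → 0 ≤ b → a * b = p * c ^ 2 → (p : ℤ) ∣ a →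
      ∃ u v : ℤ, a = p * v ^ 2 ∧ b = u ^ 2 := by
    rintro a b hab ha hb h ⟨d, rfl⟩
    have h' : d * b = c ^ 2 := by
      apply mul_left_cancel₀ hp0
      linarith
    have hd : 0 ≤ d := by nlinarith
    have hcop : IsCoprime d b := hab.of_mul_left_right
    obtain ⟨v, hv⟩ := Int.sq_of_gcd_eq_one (Int.isCoprime_iff_gcd_eq_one.mp hcop) h'
    obtain ⟨u, hu⟩ := Int.sq_of_gcd_eq_one (Int.isCoprime_iff_gcd_eq_one.mp hcop.symm) (by rw [mul_comm]; exact h')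
    refine ⟨u, v, ?_, ?_⟩
    · rcases hv with hv | hv
      · rw [hv]
      · have : d = 0 := by nlinarith [sq_nonneg v]
        have : v ^ 2 = 0 := by omega
        rw [hv, this]; simp
    · rcases hu with hv | hv
      · exact hv
      · nlinarith [sq_nonneg u]
  rcases hpp.dvd_or_dvd (Dvd.intro _ h.symm) with h1 | h1
  · obtain ⟨u, v, h⟩ := key a b hab ha hb h h1
    exact ⟨u, v, Or.inr h⟩
  · obtain ⟨u, v, h⟩ := key b a hab.symm hb ha (by rw [mul_comm]; exact h) h1
    exact ⟨u, v, Or.inl ⟨h.2, h.1⟩⟩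

lemma pell_three {p : ℕ} (hp : p.Prime) :
    ∃ u v : ℤ, u ^ 2 - p * v ^ 2 = -1 ∨ u ^ 2 - p * v ^ 2 = 2 ∨ u ^ 2 - p * v ^ 2 = -2 := by
  rcases hp.eq_two_or_odd with rfl | hodd
  · exact ⟨1, 1, by norm_num⟩
  have hpp : Prime (p : ℤ) := Nat.prime_iff_prime_int.mp hp
  have hpos : (0 : ℤ) < p := by exact_mod_cast hp.pos
  obtain ⟨s, hs⟩ := Pell.IsFundamental.exists_of_not_isSquare hpos hpp.not_isSquare
  have hprop := s.prop
  have hx1 := hs.1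
  have hmin : ∀ u v : ℤ, 1 < u → u ^ 2 - p * v ^ 2 = 1 → s.x ≤ u := fun u v hu h =>
    hs.x_le_x (a := Pell.Solution₁.mk u v h) (by simpa using hu)
  have hy0 := hs.2.1
  generalize s.x = x at *
  generalize s.y = y at *
  clear hs s
  rcases Int.even_or_odd' x with ⟨k, rfl | rfl⟩
  · -- x even
    obtain ⟨u, v, h | h⟩ := pell_aux (a := 2 * k + 1) (b := 2 * k - 1) (c := y) hp ⟨k, 1 - k - 1 + 1 - 1 - 1 , by ring⟩ (by omega) (by omega) (by linarith)
    · exact ⟨u, v, by right; left; linarith⟩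
    · exact ⟨u, v, by right; right; linarith⟩
  · have hye : Even y := by
      by_contra hy
      rw [Int.not_even_iff_odd] at hy
      have h1 : (p : ℤ) * y ^ 2 = 2 * (2 * k ^ 2 + 2 * k) := by linarith
      have : Odd ((p : ℤ) * y ^ 2) := Odd.mul (by exact_mod_cast Nat.odd_iff.mpr hodd) hy.pow
      rw [h1] at this
      exact (Int.not_odd_iff_even.mpr (even_two_mul _)) this
    obtain ⟨c, rfl⟩ := hye.two_dvd
    obtain ⟨u, v, h | h⟩ := pell_aux (a := k + 1) (b := k) (c := c) hp ⟨1, -1, by ring⟩ (by omega) (by omega) (by linarith)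
    · exfalso
      have hk : 0 < k := by omega
      have h1 : 1 < |u| := by
        by_contra hu
        have : |u| ^ 2 ≤ 1 := by nlinarith [abs_nonneg u]
        rw [sq_abs] at this
        omega
      have h2 := hmin |u| v h1 (by rw [sq_abs]; linarith)
      have h3 : |u| ^ 2 = k + 1 := by rw [sq_abs]; linarith
      nlinarith
    · exact ⟨u, v, by left; linarith⟩

/-- every element is `x + y θ` -/
lemma quad_repr {p : ℕ} (hp : p.Prime) {K : Type*} [Field K] [NumberField K]
    (h2 : Module.finrank ℚ K = 2) {θ : K} (hθ : θ ^ 2 = (p : K)) (a : K) :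
    ∃ x y : ℚ, a = x + y * θ := by
  have hirr : ∀ q : ℚ, (q : K) ≠ θ := by
    intro q hq
    have h1 : (q : K) ^ 2 = p := by rw [hq, hθ]
    have h2 : q ^ 2 = p := by exact_mod_cast h1
    have h3 : IsSquare ((p : ℚ)) := ⟨q, by rw [← h2]; ring⟩
    rw [Rat.isSquare_natCast_iff] at h3
    exact (Nat.prime_iff.mp hp).not_isSquare h3
  have hli : LinearIndependent ℚ ![(1 : K), θ] := by
    rw [LinearIndependent.pair_iff]
    intro s t h
    simp only [Algebra.smul_def, eq_ratCast, mul_one] at h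
    have ht : t = 0 := by
      by_contra ht
      have ht' : (t : K) ≠ 0 := by exact_mod_cast ht
      apply hirr (-s / t)
      push_cast
      field_simp
      linear_combination -h
    subst ht
    simpa using h
  have hs := hli.span_eq_top_of_card_eq_finrank' (by simp [h2])
  have ha : a ∈ Submodule.span ℚ (Set.range ![(1 : K), θ]) := by rw [hs]; trivial
  rw [Matrix.range_cons, Matrix.range_cons, Matrix.range_empty, Set.union_empty,
    Set.singleton_union, Submodule.mem_span_pair] at ha
  obtain ⟨x, y, h⟩ := ha
  exact ⟨x, y, by rw [← h]; simp [Algebra.smul_def]⟩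

lemma exists_conj {p : ℕ} (hp : p.Prime) {K : Type*} [Field K] [NumberField K]
    (h2 : Module.finrank ℚ K = 2) {θ : K} (hθ : θ ^ 2 = (p : K)) :
    IsGalois ℚ K ∧ ∃ σ : K ≃ₐ[ℚ] K, σ θ = -θ ∧ ∀ τ : K ≃ₐ[ℚ] K, τ = 1 ∨ τ = σ := by
  have hQ : Algebra.IsQuadraticExtension ℚ K := { finrank_eq_two' := h2 }
  have hG : IsGalois ℚ K := inferInstance
  refine ⟨hG, ?_⟩
  have hcard := IsGalois.card_aut_eq_finrank ℚ K
  rw [h2] at hcard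
  have hpm : ∀ τ : K ≃ₐ[ℚ] K, τ θ = θ ∨ τ θ = -θ := by
    intro τ
    apply sq_eq_sq_iff_eq_or_eq_neg.mp
    rw [← map_pow, hθ]; simp
  have hext : ∀ τ τ' : K ≃ₐ[ℚ] K, τ θ = τ' θ → τ = τ' := by
    intro τ τ' h
    ext a
    obtain ⟨x, y, rfl⟩ := quad_repr hp h2 hθ a
    simp [h]
  have : Nontrivial (K ≃ₐ[ℚ] K) := by
    rw [← Finite.one_lt_card_iff_nontrivial, hcard]; norm_num
  obtain ⟨σ, hσ⟩ := exists_ne (1 : K ≃ₐ[ℚ] K)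
  have hσθ : σ θ = -θ := (hpm σ).resolve_left fun h => hσ (hext _ _ (by simpa using h))
  refine ⟨σ, hσθ, fun τ => ?_⟩
  rcases hpm τ with h | h
  · left; exact hext _ _ (by simpa using h)
  · right; exact hext _ _ (by rw [h, hσθ])

lemma exists_real {p : ℕ} (hp : p.Prime) {K : Type*} [Field K] [NumberField K]
    (h2 : Module.finrank ℚ K = 2) {θ : K} (hθ : θ ^ 2 = (p : K)) :
    Nonempty (K →+* ℝ) := by
  obtain ⟨φ⟩ : Nonempty (K →+* ℂ) := inferInstance
  have h : ComplexEmbedding.IsReal φ := by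
    rw [ComplexEmbedding.isReal_iff]
    ext a
    obtain ⟨x, y, rfl⟩ := quad_repr hp h2 hθ a
    have : (φ θ) ^ 2 = ((Real.sqrt p : ℝ) : ℂ) ^ 2 := by
      rw [← map_pow, hθ, ← Complex.ofReal_pow, Real.sq_sqrt (by positivity)]; simp
    have h3 : (starRingEnd ℂ) (φ θ) = φ θ := by
      rcases sq_eq_sq_iff_eq_or_eq_neg.mp this with h | h <;> rw [h] <;> simp
    simp [ComplexEmbedding.conjugate_coe_eq, h3]
  exact ⟨h.embedding⟩

/-- All real embeddings differ by conj. -/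
lemma real_emb {p : ℕ} (hp : p.Prime) {K : Type*} [Field K] [NumberField K]
    (h2 : Module.finrank ℚ K = 2) {θ : K} (hθ : θ ^ 2 = (p : K)) (σ : K ≃ₐ[ℚ] K)
    (hσ : σ θ = -θ) (φ ψ : K →+* ℝ) : (∀ a, ψ a = φ a) ∨ (∀ a, ψ a = φ (σ a)) := by
  have : (φ θ) ^ 2 = (ψ θ) ^ 2 := by
    rw [← map_pow, ← map_pow, hθ]; simp
  rcases sq_eq_sq_iff_eq_or_eq_neg.mp this with h | h
  · left
    intro a
    obtain ⟨x, y, rfl⟩ := quad_repr hp h2 hθ a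
    simp [h]
  · right
    intro a
    obtain ⟨x, y, rfl⟩ := quad_repr hp h2 hθ a
    simp [hσ, h]

/-- Up to sign and `θ`, everything is totally positive. -/
lemma sign_cases {p : ℕ} (hp : p.Prime) {K : Type*} [Field K] [NumberField K]
    (h2 : Module.finrank ℚ K = 2) {θ : K} (hθ : θ ^ 2 = (p : K)) (σ : K ≃ₐ[ℚ] K)
    (hσ : σ θ = -θ) (a : K) (ha : a ≠ 0) :
    ∃ e : K, (e = 1 ∨ e = -1) ∧ ((∀ φ : K →+* ℝ, 0 < φ (e * a)) ∨
      (∀ φ : K →+* ℝ, 0 < φ (e * a * θ))) := by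
  obtain ⟨φ⟩ := exists_real hp h2 hθ
  have hθ0 : θ ≠ 0 := by
    rintro rfl
    have : (p : K) = 0 := by rw [← hθ]; simp
    exact hp.ne_zero (by exact_mod_cast this)
  have key : ∀ b : K, 0 < φ b → 0 < φ (σ b) → ∀ ψ : K →+* ℝ, 0 < ψ b := by
    intro b h1 h2' ψ
    rcases real_emb hp h2 hθ σ hσ φ ψ with h | h <;> rw [h] <;> assumption
  have h0 : ∀ b : K, b ≠ 0 → φ b < 0 ∨ 0 < φ b := fun b hb =>
    lt_or_gt_of_ne ((map_ne_zero φ).mpr hb)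
  have hσa : σ a ≠ 0 := (map_ne_zero σ).mpr ha
  rcases h0 a ha with h1 | h1 <;> rcases h0 _ hσa with h3 | h3 <;> rcases h0 θ hθ0 with h4 | h4
  · exact ⟨-1, by simp, Or.inl (key _ (by simpa) (by simpa))⟩
  · exact ⟨-1, by simp, Or.inl (key _ (by simpa) (by simpa))⟩
  · exact ⟨1, by simp, Or.inr (key _ (by simpa using by nlinarith) (by simp [hσ]; nlinarith))⟩
  · exact ⟨-1, by simp, Or.inr (key _ (by simpa using by nlinarith) (by simp [hσ]; nlinarith))⟩
  · exact ⟨-1, by simp, Or.inr (key _ (by simpa using by nlinarith) (by simp [hσ]; nlinarith))⟩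
  · exact ⟨1, by simp, Or.inr (key _ (by simpa using by nlinarith) (by simp [hσ]; nlinarith))⟩
  · exact ⟨1, by simp, Or.inl (key _ (by simpa) (by simpa))⟩
  · exact ⟨1, by simp, Or.inl (key _ (by simpa) (by simpa))⟩

lemma rat_int_of_integral {K : Type*} [Field K] [NumberField K] (a : 𝓞 K) (x : ℚ)
    (h : algebraMap (𝓞 K) K a = x) : ∃ n : ℤ, x = n := by
  have h1 : IsIntegral ℤ (x : K) := h ▸ RingOfIntegers.isIntegral_coe a
  have h2 : IsIntegral ℤ (algebraMap ℚ K x) := by simpa using h1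
  rw [isIntegral_algebraMap_iff (algebraMap ℚ K).injective] at h2
  obtain ⟨n, hn⟩ := IsIntegrallyClosed.isIntegral_iff.mp h2
  exact ⟨n, by rw [← hn]; simp⟩

lemma int_repr {p : ℕ} (hp : p.Prime) {K : Type*} [Field K] [NumberField K]
    (h2 : Module.finrank ℚ K = 2) (θ : 𝓞 K) (hθ : θ ^ 2 = (p : 𝓞 K)) (σ : K ≃ₐ[ℚ] K)
    (hσ : σ (algebraMap (𝓞 K) K θ) = -algebraMap (𝓞 K) K θ) (s : 𝓞 K ≃+* 𝓞 K) (hs : ∀ a : 𝓞 K, algebraMap (𝓞 K) K (s a) = σ (algebraMap (𝓞 K) K a)) (a : 𝓞 K) :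
    ∃ t Y n : ℤ, 2 * a = t + Y * θ ∧ a * s a = n ∧ a + s a = t ∧ t ^ 2 - p * Y ^ 2 = 4 * n := by
  have hθK : (algebraMap (𝓞 K) K θ) ^ 2 = (p : K) := by
    rw [← map_pow, hθ]; simp
  obtain ⟨x, y, hxy⟩ := quad_repr hp h2 hθK (algebraMap (𝓞 K) K a)
  have hsa : algebraMap (𝓞 K) K (s a) = x - y * algebraMap (𝓞 K) K θ := by
    rw [hs, hxy, map_add, map_mul, hσ, map_ratCast, map_ratCast]; ring
  obtain ⟨t, ht⟩ := rat_int_of_integral (a + s a) (2 * x) (by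
    rw [map_add, hsa, hxy]; push_cast; ring)
  obtain ⟨n, hn⟩ := rat_int_of_integral (a * s a) (x ^ 2 - p * y ^ 2) (by
    rw [map_mul, hsa, hxy]; push_cast; linear_combination (-(y : K) ^ 2) * hθK)
  obtain ⟨Z, hZ⟩ := rat_int_of_integral ((a - s a) * θ) (2 * y * p) (by
    rw [map_mul, map_sub, hsa, hxy]; push_cast; linear_combination (2 * y : K) * hθK)
  have hm : (Z : ℚ) ^ 2 = p * (t ^ 2 - 4 * n) := by
    rw [← ht, ← hZ, ← hn]; ring
  have hm' : Z ^ 2 = p * (t ^ 2 - 4 * n) := by exact_mod_cast hm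
  have hpp : Prime (p : ℤ) := Nat.prime_iff_prime_int.mp hp
  obtain ⟨Y, rfl⟩ := hpp.dvd_of_dvd_pow (Dvd.intro _ hm'.symm)
  have hp0 : (p : ℚ) ≠ 0 := by exact_mod_cast hp.ne_zero
  have hY : 2 * y = Y := by
    push_cast at hZ
    apply mul_left_cancel₀ hp0
    linarith
  have htK : (2 : K) * x = t := by exact_mod_cast congrArg (Rat.cast : ℚ → K) ht
  have hYK : (2 : K) * y = Y := by exact_mod_cast congrArg (Rat.cast : ℚ → K) hY
  have hnK : (x : K) ^ 2 - p * y ^ 2 = n := by exact_mod_cast congrArg (Rat.cast : ℚ → K) hn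
  refine ⟨t, Y, n, ?_, ?_, ?_, ?_⟩
  · apply RingOfIntegers.coe_injective
    simp only [map_add, map_mul, map_intCast, map_ofNat]
    rw [hxy, ← htK, ← hYK]; ring
  · apply RingOfIntegers.coe_injective
    simp only [map_add, map_mul, map_intCast, map_ofNat]
    rw [hsa, hxy, ← hnK]; linear_combination (-(y : K) ^ 2) * hθK
  · apply RingOfIntegers.coe_injective
    simp only [map_add, map_mul, map_intCast, map_ofNat]
    rw [hsa, hxy, ← htK]; ring
  · have : (t : ℚ) ^ 2 - p * Y ^ 2 = 4 * n := by
      rw [← ht, ← hY, ← hn]; ring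
    exact_mod_cast this

lemma absNorm_nat {K : Type*} [Field K] [NumberField K] (h2 : Module.finrank ℚ K = 2) (n : ℕ) :
    Ideal.absNorm (Ideal.span {(n : 𝓞 K)}) = n ^ 2 := by
  rw [Ideal.absNorm_span_singleton]
  have : (n : 𝓞 K) = algebraMap ℤ (𝓞 K) n := by simp
  rw [this, Algebra.norm_algebraMap, RingOfIntegers.rank, h2, Int.natAbs_pow, Int.natAbs_natCast]

open Pointwise in
lemma prime_cases {K : Type*} [Field K] [NumberField K] [IsGalois ℚ K]
    (h2 : Module.finrank ℚ K = 2) (σ : K ≃ₐ[ℚ] K) (hσ : ∀ τ : K ≃ₐ[ℚ] K, τ = 1 ∨ τ = σ)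
    (s : 𝓞 K ≃+* 𝓞 K) (hs : ∀ a : 𝓞 K, algebraMap (𝓞 K) K (s a) = σ (algebraMap (𝓞 K) K a))
    (P : Ideal (𝓞 K)) (hP : P.IsPrime) (hP0 : P ≠ ⊥) :
    ∃ q : ℕ, q.Prime ∧ (P = Ideal.span {(q : 𝓞 K)} ∨ P * P.map s = Ideal.span {(q : 𝓞 K)}) := by
  have hmap : ∀ I : Ideal (𝓞 K), I.map s = σ • I := by
    intro I
    change I.map (s : 𝓞 K →+* 𝓞 K) = I.map _
    congr 1
    ext a
    exact hs a
  have : NeZero P := ⟨hP0⟩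
  have hq := Nat.absNorm_under_prime P
  have hunder : ∀ M : Ideal (𝓞 K), M.IsPrime → ∀ q : ℕ, q.Prime → (q : 𝓞 K) ∈ M →
      Ideal.under ℤ M = Ideal.span {(q : ℤ)} := by
    intro M hM q hq hqM
    have hmax : (Ideal.span {(q : ℤ)}).IsMaximal :=
      PrincipalIdealRing.isMaximal_of_irreducible (Nat.prime_iff_prime_int.mp hq).irreducible
    symm
    apply hmax.eq_of_le (Ideal.IsPrime.under ℤ M).ne_top
    rw [Ideal.span_singleton_le_iff_mem, Ideal.mem_comap]
    simpa using hqM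
  set q := Ideal.absNorm (Ideal.under ℤ P) with hqdef
  have hqP : (q : 𝓞 K) ∈ P := by
    have := Ideal.absNorm_mem (Ideal.under ℤ P)
    rw [Ideal.mem_comap] at this
    simpa using this
  refine ⟨q, hq, ?_⟩
  obtain ⟨M, hM⟩ := Ideal.dvd_span_singleton.mpr hqP
  have hnorm : Ideal.absNorm P * Ideal.absNorm M = q ^ 2 := by
    rw [← map_mul, ← hM, absNorm_nat h2]
  obtain ⟨k, hk, hkP⟩ := (Nat.dvd_prime_pow hq).mp (Dvd.intro _ hnorm)
  have hP1 : Ideal.absNorm P ≠ 1 := fun h => hP.ne_top (Ideal.absNorm_eq_one_iff.mp h)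
  interval_cases k
  · simp at hkP; exact absurd hkP (by simpa using hP1)
  · right
    have hMn : Ideal.absNorm M = q := by
      rw [hkP, pow_one, sq] at hnorm
      exact Nat.eq_of_mul_eq_mul_left hq.pos hnorm
    have hMp : M.IsPrime := Ideal.isPrime_of_irreducible_absNorm (by rw [hMn]; exact hq)
    have hqM : (q : 𝓞 K) ∈ M := Ideal.dvd_span_singleton.mp (by rw [hM]; exact dvd_mul_left _ _)
    obtain ⟨g, hg⟩ := Algebra.IsInvariant.exists_smul_of_under_eq ℤ (𝓞 K) (K ≃ₐ[ℚ] K) P M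
      ((hunder P hP q hq hqP).trans (hunder M hMp q hq hqM).symm)
    rcases hσ g with rfl | rfl
    · rw [one_smul] at hg
      have h3 : Ideal.map s P * Ideal.map s P = P * P := by
        rw [hg] at hM
        rw [← Ideal.map_mul, ← hM, Ideal.map_span]; simp
      have hsP : (Ideal.map s P).IsPrime := Ideal.map_isPrime_of_equiv s
      have h4 : P ≤ Ideal.map s P := by
        have : P * P ≤ Ideal.map s P := h3 ▸ Ideal.mul_le_left
        rcases (hsP.mul_le).mp this with h | h <;> exact h
      have h5 : P = Ideal.map s P := (hP.isMaximal hP0).eq_of_le hsP.ne_top h4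
      rw [← h5, hM, hg]
    · rw [hmap, ← hg, hM]
  · left
    have hMn : Ideal.absNorm M = 1 := by
      rw [hkP] at hnorm
      exact Nat.eq_of_mul_eq_mul_left (pow_pos hq.pos 2) (by rw [hnorm, mul_one])
    rw [Ideal.absNorm_eq_one_iff] at hMn
    rw [hM, hMn, Ideal.mul_top]

section ringlevel

lemma ideal_sq_inj {R : Type*} [CommRing R] [IsDedekindDomain R] {P A : Ideal R}
    (hP : P.IsPrime) (hP0 : P ≠ ⊥) (h : P * P = A * A) : P = A := by
  have h1 : A ≤ P := by
    have : A * A ≤ P := h ▸ Ideal.mul_le_left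
    rcases (hP.mul_le).mp this with h | h <;> exact h
  obtain ⟨M, hM⟩ := Ideal.dvd_iff_le.mpr h1
  have h2 : P * P * (M * M) = P * P * 1 := by
    rw [mul_one]; nth_rewrite 2 [h]; rw [hM]; ring
  have h3 : M * M = 1 := mul_left_cancel₀ (mul_ne_zero hP0 hP0) h2
  have h4 : M = 1 := by
    rw [Ideal.one_eq_top] at h3 ⊢
    exact top_le_iff.mp (h3 ▸ Ideal.mul_le_left)
  rw [hM, h4, mul_one]

lemma int_mem_prime {R : Type*} [CommRing R] {P : Ideal R} (hP : P ≠ ⊤) {q : ℕ} (hq : q.Prime)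
    (hqP : (q : R) ∈ P) {n : ℤ} (hn : (n : R) ∈ P) : (q : ℤ) ∣ n := by
  by_contra h
  have hc : IsCoprime (q : ℤ) n :=
    ((Nat.prime_iff_prime_int.mp hq).irreducible.coprime_iff_not_dvd).mpr h
  obtain ⟨x, y, hxy⟩ := hc
  apply hP
  rw [Ideal.eq_top_iff_one]
  have : (1 : R) = x * q + y * n := by exact_mod_cast (congrArg (Int.cast : ℤ → R) hxy).symm
  rw [this]
  exact P.add_mem (P.mul_mem_left _ hqP) (P.mul_mem_left _ hn)

variable {R : Type*} [CommRing R] [IsDedekindDomain R] [CharZero R]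

lemma ramified_principal {p : ℕ} (hp : p.Prime) (θ : R) (hθ : θ ^ 2 = (p : R)) (s : R ≃+* R)
    (hrep : ∀ a : R, ∃ t Y n : ℤ, 2 * a = t + Y * θ ∧ a * s a = n ∧ a + s a = t ∧
      t ^ 2 - p * Y ^ 2 = 4 * n)
    (hq2 : (p % 4 = 1 ∧ ∃ ω : R, 2 * ω = 1 + θ) ∨ p = 2 ∨
      ∃ u v : ℤ, u ^ 2 - p * v ^ 2 = 2 ∨ u ^ 2 - p * v ^ 2 = -2)
    (P : Ideal R) (hP : P.IsPrime) (hP0 : P ≠ ⊥) (hsP : P.map s = P) (q : ℕ) (hq : q.Prime)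
    (hPq : P * P = Ideal.span {(q : R)}) : ∃ c : R, P = Ideal.span {c} := by
  by_cases hqp : q = p
  · subst hqp
    refine ⟨θ, ideal_sq_inj hP hP0 ?_⟩
    rw [hPq, Ideal.span_singleton_mul_span_singleton, ← hθ, sq]
  by_cases hπ : q = 2 ∧ ∃ u v : ℤ, u ^ 2 - p * v ^ 2 = 2 ∨ u ^ 2 - p * v ^ 2 = -2
  · obtain ⟨rfl, u, v, huv⟩ := hπ
    refine ⟨u + v * θ, ideal_sq_inj hP hP0 ?_⟩
    rw [hPq, Ideal.span_singleton_mul_span_singleton, Ideal.span_singleton_eq_span_singleton]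
    obtain ⟨e, he, huv⟩ : ∃ e : ℤ, e ^ 2 = 1 ∧ u ^ 2 - p * v ^ 2 = 2 * e := by
      rcases huv with h | h
      · exact ⟨1, by norm_num, by rw [h]; norm_num⟩
      · exact ⟨-1, by norm_num, by rw [h]; norm_num⟩
    have he' : (e : R) ^ 2 = 1 := by exact_mod_cast congrArg (Int.cast : ℤ → R) he
    have huv' : (u : R) ^ 2 - p * v ^ 2 = 2 * e := by
      exact_mod_cast congrArg (Int.cast : ℤ → R) huv
    have hunit : ((p : R) * v ^ 2 + e + u * v * θ) * ((p : R) * v ^ 2 + e - u * v * θ) = 1 := by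
      linear_combination (-(u : R) ^ 2 * v ^ 2) * hθ + he' - p * v ^ 2 * huv'
    refine ⟨⟨_, _, hunit, by rw [mul_comm]; exact hunit⟩, ?_⟩
    simp only [Nat.cast_ofNat]
    linear_combination (-(v : R) ^ 2) * hθ - huv'
  exfalso
  have hqP : (q : R) ∈ P := by
    have : (q : R) ∈ P * P := hPq ▸ Ideal.mem_span_singleton_self _
    exact Ideal.mul_le_left this
  have hle : P ≤ Ideal.span {(q : R)} := by
    intro α hα
    rw [Ideal.mem_span_singleton]
    obtain ⟨t, Y, n, h1, h2, h3, h4⟩ := hrep α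
    have hsα : s α ∈ P := hsP ▸ Ideal.mem_map_of_mem s hα
    obtain ⟨t, rfl⟩ := int_mem_prime hP.ne_top hq hqP (n := t) (h3 ▸ P.add_mem hα hsα)
    have hn := int_mem_prime hP.ne_top hq hqP (n := n) (h2 ▸ P.mul_mem_right _ hα)
    have hqq : Prime (q : ℤ) := Nat.prime_iff_prime_int.mp hq
    have hY : (q : ℤ) ∣ Y := by
      have : (q : ℤ) ∣ p * Y ^ 2 := by
        have : (p : ℤ) * Y ^ 2 = q * (q * t ^ 2) - 4 * n := by linarith
        rw [this]
        exact dvd_sub (dvd_mul_right _ _) (dvd_mul_of_dvd_right hn _)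
      rcases hqq.dvd_or_dvd this with h | h
      · exact absurd ((Nat.prime_dvd_prime_iff_eq hq hp).mp (by exact_mod_cast h)) hqp
      · exact hqq.dvd_of_dvd_pow h
    obtain ⟨Y, rfl⟩ := hY
    rcases hq.eq_two_or_odd' with rfl | ⟨k, rfl⟩
    · have hα : α = t + Y * θ := by
        apply mul_left_cancel₀ (two_ne_zero : (2 : R) ≠ 0)
        rw [h1]; push_cast; ring
      rcases hq2 with ⟨hp4, ω, hω⟩ | h | h
      · obtain ⟨m, hm⟩ : ∃ m : ℤ, t - Y = 2 * m := by
          obtain ⟨n, rfl⟩ := hn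
          have h5 : t ^ 2 - p * Y ^ 2 = 2 * n := by push_cast at h4; linarith
          obtain ⟨r, hr⟩ : ∃ r : ℕ, p = 4 * r + 1 := ⟨p / 4, by omega⟩
          subst hr
          have h6 : t ^ 2 - Y ^ 2 = 2 * (n + 2 * r * Y ^ 2) := by push_cast at h5; linarith
          have h7 : Even (t ^ 2 - Y ^ 2) := ⟨n + 2 * r * Y ^ 2, by rw [h6]; ring⟩
          have h8 : Even (t - Y) := by
            simpa [Int.even_sub, Int.even_pow] using h7
          exact h8.two_dvd
        refine ⟨m + Y * ω, ?_⟩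
        have hm' : (t : R) - Y = 2 * m := by exact_mod_cast congrArg (Int.cast : ℤ → R) hm
        rw [hα]
        push_cast
        linear_combination hm' - (Y : R) * hω
      · exact absurd h.symm hqp
      · exact absurd ⟨rfl, h⟩ hπ
    · refine ⟨α - k * (t + Y * θ), ?_⟩
      push_cast at h1 ⊢
      linear_combination (-k : R) * h1
  have h5 : P * P = P * 1 := by
    rw [mul_one]
    exact le_antisymm Ideal.mul_le_left (hPq ▸ hle)
  have h6 : P = 1 := mul_left_cancel₀ hP0 h5
  exact hP.ne_top (by rw [h6, Ideal.one_eq_top])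

lemma map_span_nat {R : Type*} [CommRing R] (s : R ≃+* R) (n : ℕ) :
    (Ideal.span {(n : R)}).map s = Ideal.span {(n : R)} := by
  rw [Ideal.map_span]; simp

lemma invariant_principal (s : R ≃+* R)
    (hss : ∀ a, s (s a) = a)
    (hprime : ∀ P : Ideal R, P.IsPrime → P ≠ ⊥ → ∃ q : ℕ, q.Prime ∧
      (P = Ideal.span {(q : R)} ∨ P * P.map s = Ideal.span {(q : R)}))
    (hram : ∀ P : Ideal R, P.IsPrime → P ≠ ⊥ → P.map s = P → ∀ q : ℕ, q.Prime →
      P * P = Ideal.span {(q : R)} → ∃ c : R, P = Ideal.span {c})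
    (J : Ideal R) (hJ0 : J ≠ ⊥) (hJ : J.map s = J) : ∃ c : R, J = Ideal.span {c} := by
  induction J using WellFoundedGT.induction with
  | ind J ih =>
  by_cases hT : J = ⊤
  · exact ⟨1, by rw [hT, Ideal.span_singleton_one]⟩
  have step : ∀ A : Ideal R, A ≠ ⊤ → A.map s = A → (∃ c, A = Ideal.span {c}) → A ∣ J →
      ∃ c : R, J = Ideal.span {c} := by
    rintro A hA hsA ⟨c, hc⟩ ⟨J', rfl⟩
    have hA0 : A ≠ 0 := left_ne_zero_of_mul hJ0
    have hJ'0 : J' ≠ 0 := right_ne_zero_of_mul hJ0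
    rw [Ideal.map_mul, hsA] at hJ
    have hlt : J' > A * J' := by
      refine lt_of_le_of_ne Ideal.mul_le_right ?_
      intro h
      apply hA
      rw [← Ideal.one_eq_top]
      exact mul_right_cancel₀ hJ'0 (by rw [h, one_mul])
    obtain ⟨d, hd⟩ := ih J' hlt hJ'0 (mul_left_cancel₀ hA0 hJ)
    exact ⟨c * d, by rw [hc, hd, Ideal.span_singleton_mul_span_singleton]⟩
  obtain ⟨P, hPm, hJP⟩ := Ideal.exists_le_maximal J hT
  have hP0 : P ≠ ⊥ := fun h => hJ0 (le_bot_iff.mp (h ▸ hJP))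
  have hsm : (P.map s).IsMaximal := Ideal.map_isMaximal_of_equiv s
  have hJsP : J ≤ P.map s := by
    rw [← hJ]; exact Ideal.map_mono hJP
  obtain ⟨q, hq, h | h⟩ := hprime P hPm.isPrime hP0
  · exact step P hPm.ne_top (by rw [h, map_span_nat]) ⟨q, h⟩ (Ideal.dvd_iff_le.mpr hJP)
  · by_cases hsP : P.map s = P
    · exact step P hPm.ne_top hsP
        (hram P hPm.isPrime hP0 hsP q hq (by rw [← h, hsP])) (Ideal.dvd_iff_le.mpr hJP)
    · refine step (P * P.map s) ?_ (by rw [h, map_span_nat]) ⟨q, h⟩ ?_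
      · intro h'
        exact hPm.ne_top (top_le_iff.mp (h' ▸ Ideal.mul_le_left))
      · have hc : IsCoprime P (P.map s) :=
          Ideal.isCoprime_of_isMaximal (fun h => hsP h.symm)
        exact hc.mul_dvd (Ideal.dvd_iff_le.mpr hJP) (Ideal.dvd_iff_le.mpr hJsP)

lemma norm_exists (s : R ≃+* R)
    (hprime : ∀ P : Ideal R, P.IsPrime → P ≠ ⊥ → ∃ q : ℕ, q.Prime ∧
      (P = Ideal.span {(q : R)} ∨ P * P.map s = Ideal.span {(q : R)}))
    (I : Ideal R) (hI0 : I ≠ ⊥) : ∃ n : ℕ, 0 < n ∧ I * I.map s = Ideal.span {(n : R)} := by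
  induction I using WellFoundedGT.induction with
  | ind I ih =>
  by_cases hT : I = ⊤
  · exact ⟨1, one_pos, by rw [hT, Ideal.map_top]; simp⟩
  obtain ⟨P, hPm, hIP⟩ := Ideal.exists_le_maximal I hT
  have hP0 : P ≠ ⊥ := fun h => hI0 (le_bot_iff.mp (h ▸ hIP))
  obtain ⟨m, hm0, hm⟩ : ∃ m : ℕ, 0 < m ∧ P * P.map s = Ideal.span {(m : R)} := by
    obtain ⟨q, hq, h | h⟩ := hprime P hPm.isPrime hP0
    · exact ⟨q * q, mul_pos hq.pos hq.pos, by
        rw [h, map_span_nat, Ideal.span_singleton_mul_span_singleton]; push_cast; rfl⟩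
    · exact ⟨q, hq.pos, h⟩
  obtain ⟨I', rfl⟩ := Ideal.dvd_iff_le.mpr hIP
  have hI'0 : I' ≠ 0 := right_ne_zero_of_mul hI0
  have hlt : I' > P * I' := by
    refine lt_of_le_of_ne Ideal.mul_le_right ?_
    intro h
    apply hPm.ne_top
    rw [← Ideal.one_eq_top]
    exact mul_right_cancel₀ hI'0 (by rw [h, one_mul])
  obtain ⟨n, hn0, hn⟩ := ih I' hlt hI'0
  refine ⟨m * n, mul_pos hm0 hn0, ?_⟩
  rw [Ideal.map_mul, mul_mul_mul_comm, hm, hn, Ideal.span_singleton_mul_span_singleton]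
  push_cast; rfl

lemma torsion_principal (s : R ≃+* R) (hss : ∀ a, s (s a) = a)
    (hinv : ∀ J : Ideal R, J ≠ ⊥ → J.map s = J → ∃ c : R, J = Ideal.span {c})
    (I : Ideal R) (a : R) (n : ℕ) (ha : I * I = Ideal.span {a}) (ha0 : a ≠ 0)
    (hn : I * I.map s = Ideal.span {(n : R)}) (han : a * s a = n ^ 2) (hb : a + n ≠ 0) :
    ∃ c : R, I * Ideal.span {s (a + n)} = Ideal.span {c} := by
  have hsn : s (n : R) = n := map_natCast s n
  have hA0 : Ideal.span {a} ≠ 0 := by simpa using ha0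
  apply hinv
  · have hI0 : I ≠ 0 := by
      rintro rfl
      simp at ha
      exact ha0 (Ideal.span_singleton_eq_bot.mp ha.symm)
    apply mul_ne_zero hI0
    simpa using (map_ne_zero_iff s s.injective).mpr hb
  · apply mul_left_cancel₀ hA0
    have h1 : a * s (a + n) = n * (a + n) := by
      rw [map_add, hsn]; linear_combination han
    rw [Ideal.map_mul, Ideal.map_span, Set.image_singleton, hss]
    calc Ideal.span {a} * (I.map s * Ideal.span {a + (n : R)})
        = I * (I * I.map s) * Ideal.span {a + (n : R)} := by rw [← ha]; ring
      _ = I * (Ideal.span {(n : R)} * Ideal.span {a + (n : R)}) := by rw [hn]; ring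
      _ = I * (Ideal.span {a} * Ideal.span {s (a + (n : R))}) := by
        rw [Ideal.span_singleton_mul_span_singleton, ← h1,
          Ideal.span_singleton_mul_span_singleton]
      _ = _ := by ring

end ringlevel

section grouplevel

variable {K : Type*} [Field K] [NumberField K]

lemma mem_totPos (I : (FractionalIdeal (nonZeroDivisors (𝓞 K)) K)ˣ) :
    I ∈ totPosPrincipal K ↔ ∃ a : K, (∀ φ : K →+* ℝ, 0 < φ a) ∧
      (I : FractionalIdeal (nonZeroDivisors (𝓞 K)) K) =
        FractionalIdeal.spanSingleton (nonZeroDivisors (𝓞 K)) a := by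
  constructor
  · intro h
    induction h using Subgroup.closure_induction with
    | mem x hx => exact hx
    | one => exact ⟨1, by simp, by simp⟩
    | mul x y _ _ hx hy =>
      obtain ⟨a, ha, ha'⟩ := hx
      obtain ⟨b, hb, hb'⟩ := hy
      refine ⟨a * b, fun φ => ?_, ?_⟩
      · rw [map_mul]; exact mul_pos (ha φ) (hb φ)
      · rw [Units.val_mul, ha', hb', FractionalIdeal.spanSingleton_mul_spanSingleton]
    | inv x _ hx =>
      obtain ⟨a, ha, ha'⟩ := hx
      refine ⟨a⁻¹, fun φ => ?_, ?_⟩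
      · rw [map_inv₀]; exact inv_pos.mpr (ha φ)
      · rw [Units.val_inv_eq_inv_val, ha', FractionalIdeal.spanSingleton_inv]
  · intro h
    exact Subgroup.subset_closure h

lemma spanSingleton_sign (e a : K) (he : e = 1 ∨ e = -1) :
    FractionalIdeal.spanSingleton (nonZeroDivisors (𝓞 K)) (e * a) =
      FractionalIdeal.spanSingleton (nonZeroDivisors (𝓞 K)) a := by
  rcases he with rfl | rfl
  · simp
  · rw [neg_one_mul]
    apply FractionalIdeal.coeToSubmodule_injective
    beta_reduce
    rw [FractionalIdeal.coe_spanSingleton, FractionalIdeal.coe_spanSingleton,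
      ← Set.neg_singleton, Submodule.span_neg]

lemma claimC {p : ℕ} (hp : p.Prime) 
    (h2 : Module.finrank ℚ K = 2) {θ : K} (hθ : θ ^ 2 = (p : K)) (σ : K ≃ₐ[ℚ] K)
    (hσ : σ θ = -θ) (T I : (FractionalIdeal (nonZeroDivisors (𝓞 K)) K)ˣ)
    (hT : (T : FractionalIdeal (nonZeroDivisors (𝓞 K)) K) =
      FractionalIdeal.spanSingleton (nonZeroDivisors (𝓞 K)) θ) (c : K)
    (hI : (I : FractionalIdeal (nonZeroDivisors (𝓞 K)) K) =
      FractionalIdeal.spanSingleton (nonZeroDivisors (𝓞 K)) c) :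
    I ∈ totPosPrincipal K ∨ I * T ∈ totPosPrincipal K := by
  have hc : c ≠ 0 := by
    rintro rfl
    rw [FractionalIdeal.spanSingleton_zero] at hI
    exact I.ne_zero hI
  obtain ⟨e, he, h | h⟩ := sign_cases hp h2 hθ σ hσ c hc
  · left
    rw [mem_totPos]
    exact ⟨_, h, by rw [hI, spanSingleton_sign _ _ he]⟩
  · right
    rw [mem_totPos]
    refine ⟨_, h, ?_⟩
    rw [Units.val_mul, hI, hT, FractionalIdeal.spanSingleton_mul_spanSingleton, mul_assoc,
      spanSingleton_sign _ _ he]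

lemma span_of_coe {I : Ideal (𝓞 K)} {e : K}
    (h : (I : FractionalIdeal (nonZeroDivisors (𝓞 K)) K) =
      FractionalIdeal.spanSingleton (nonZeroDivisors (𝓞 K)) e) :
    ∃ e0 : 𝓞 K, algebraMap (𝓞 K) K e0 = e ∧ I = Ideal.span {e0} := by
  have h1 : e ∈ (I : FractionalIdeal (nonZeroDivisors (𝓞 K)) K) := by
    rw [h]; exact FractionalIdeal.mem_spanSingleton_self _ _
  obtain ⟨e0, _, he0⟩ := (FractionalIdeal.mem_coeIdeal _).mp h1
  refine ⟨e0, he0, ?_⟩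
  rw [← he0, ← FractionalIdeal.coeIdeal_span_singleton] at h
  exact FractionalIdeal.coeIdeal_injective h

lemma claimD {p : ℕ} (hp : p.Prime)
    (h2 : Module.finrank ℚ K = 2) {θ : K} (hθ : θ ^ 2 = (p : K)) (σ : K ≃ₐ[ℚ] K)
    (s : 𝓞 K ≃+* 𝓞 K) (hs : ∀ a, algebraMap (𝓞 K) K (s a) = σ (algebraMap (𝓞 K) K a))
    (hss : ∀ a, s (s a) = a)
    (hN : ∀ a, ∃ n : ℤ, a * s a = n)
    (hnorm : ∀ I : Ideal (𝓞 K), I ≠ ⊥ → ∃ n : ℕ, 0 < n ∧ I * I.map s = Ideal.span {(n : 𝓞 K)})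
    (hinv : ∀ J : Ideal (𝓞 K), J ≠ ⊥ → J.map s = J → ∃ c : 𝓞 K, J = Ideal.span {c})
    (I : (FractionalIdeal (nonZeroDivisors (𝓞 K)) K)ˣ) (hI : I * I ∈ totPosPrincipal K) :
    ∃ c : K, (I : FractionalIdeal (nonZeroDivisors (𝓞 K)) K) =
      FractionalIdeal.spanSingleton (nonZeroDivisors (𝓞 K)) c := by
  obtain ⟨φ⟩ := exists_real hp h2 hθ
  obtain ⟨d, hd, hId⟩ := (mem_totPos _).mp hI
  obtain ⟨a, I0, ha0, hI0⟩ := FractionalIdeal.exists_eq_spanSingleton_mul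
    (I : FractionalIdeal (nonZeroDivisors (𝓞 K)) K)
  set A := algebraMap (𝓞 K) K a with hA
  have hA0 : A ≠ 0 := by simpa [hA] using ha0
  have hI0' : (I0 : FractionalIdeal (nonZeroDivisors (𝓞 K)) K) =
      FractionalIdeal.spanSingleton (nonZeroDivisors (𝓞 K)) A * I := by
    rw [hI0, ← mul_assoc, FractionalIdeal.spanSingleton_mul_spanSingleton,
      mul_inv_cancel₀ hA0]; simp
  have hsq : ((I0 * I0 : Ideal (𝓞 K)) : FractionalIdeal (nonZeroDivisors (𝓞 K)) K) =
      FractionalIdeal.spanSingleton (nonZeroDivisors (𝓞 K)) (A * A * d) := by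
    rw [FractionalIdeal.coeIdeal_mul, hI0', mul_mul_mul_comm, ← Units.val_mul, hId,
      FractionalIdeal.spanSingleton_mul_spanSingleton,
      FractionalIdeal.spanSingleton_mul_spanSingleton]
  obtain ⟨e, he, hIe⟩ := span_of_coe hsq
  have hepos : ∀ ψ : K →+* ℝ, 0 < ψ (algebraMap (𝓞 K) K e) := by
    intro ψ
    rw [he, map_mul, map_mul]
    exact mul_pos (mul_self_pos.mpr ((map_ne_zero ψ).mpr hA0)) (hd ψ)
  have he0 : e ≠ 0 := by
    rintro rfl
    simpa using hepos φ
  have hI0ne : I0 ≠ ⊥ := by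
    rintro rfl
    have : Ideal.span {e} = ⊥ := by rw [← hIe]; simp
    exact he0 (Ideal.span_singleton_eq_bot.mp this)
  obtain ⟨n, hn0, hn⟩ := hnorm I0 hI0ne
  obtain ⟨k, hk⟩ := hN e
  have hkpos : 0 < k := by
    have h1 := hepos φ
    have h3 := hepos (φ.comp (σ : K →+* K))
    have h4 : φ (algebraMap (𝓞 K) K (e * s e)) = k := by rw [hk]; simp
    rw [map_mul, map_mul, hs] at h4
    have : (0 : ℝ) < k := by rw [← h4]; exact mul_pos h1 h3
    exact_mod_cast this
  obtain ⟨k, rfl⟩ := Int.eq_ofNat_of_zero_le hkpos.le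
  have hkn : k = n ^ 2 := by
    have h1 : Ideal.span {((n ^ 2 : ℕ) : 𝓞 K)} = Ideal.span {(k : 𝓞 K)} := by
      have : (k : 𝓞 K) = e * s e := by rw [hk]; simp
      rw [this, ← Ideal.span_singleton_mul_span_singleton, ← hIe]
      have h3 : Ideal.span {s e} = (Ideal.span {e}).map s := by
        rw [Ideal.map_span, Set.image_singleton]
      rw [h3, ← hIe, Ideal.map_mul, mul_mul_mul_comm, hn,
        Ideal.span_singleton_mul_span_singleton]
      push_cast; rw [sq]
    have h3 := congrArg Ideal.absNorm h1
    rw [absNorm_nat h2, absNorm_nat h2] at h3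
    exact (Nat.pow_left_injective (by norm_num : (2 : ℕ) ≠ 0) h3).symm
  have hb : e + (n : 𝓞 K) ≠ 0 := by
    intro h
    have h1 : φ (algebraMap (𝓞 K) K (e + (n : 𝓞 K))) = 0 := by rw [h]; simp
    rw [map_add, map_add, map_natCast, map_natCast] at h1
    have := hepos φ
    have hn1 : (0 : ℝ) < n := by exact_mod_cast hn0
    linarith
  obtain ⟨c, hc⟩ := torsion_principal s hss hinv I0 e n hIe he0 hn
    (by rw [hk, hkn]; push_cast; rfl) hb
  have hsb : algebraMap (𝓞 K) K (s (e + n)) ≠ 0 := by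
    exact RingOfIntegers.coe_ne_zero_iff.mpr ((map_ne_zero_iff s s.injective).mpr hb)
  set B := algebraMap (𝓞 K) K (s (e + n)) with hB
  have hc' := congrArg (fun J : Ideal (𝓞 K) => (J : FractionalIdeal (nonZeroDivisors (𝓞 K)) K)) hc
  simp only [FractionalIdeal.coeIdeal_mul, FractionalIdeal.coeIdeal_span_singleton] at hc'
  refine ⟨A⁻¹ * (algebraMap (𝓞 K) K c * B⁻¹), ?_⟩
  rw [hI0, ← FractionalIdeal.spanSingleton_mul_spanSingleton,
    ← FractionalIdeal.spanSingleton_mul_spanSingleton, ← hc', ← hB, mul_assoc (I0 : FractionalIdeal (nonZeroDivisors (𝓞 K)) K),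
    FractionalIdeal.spanSingleton_mul_spanSingleton, mul_inv_cancel₀ hsb]
  simp

lemma claimE1 {p : ℕ} (hp : p.Prime)
    (h2 : Module.finrank ℚ K = 2) {θ : K} (hθ : θ ^ 2 = (p : K)) (σ : K ≃ₐ[ℚ] K)
    (hσ : σ θ = -θ) (u v : ℤ) (huv : u ^ 2 - p * v ^ 2 = -1)
    (θ0 : 𝓞 K) (hθ0 : algebraMap (𝓞 K) K θ0 = θ)
    (T : (FractionalIdeal (nonZeroDivisors (𝓞 K)) K)ˣ)
    (hT : (T : FractionalIdeal (nonZeroDivisors (𝓞 K)) K) =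
      FractionalIdeal.spanSingleton (nonZeroDivisors (𝓞 K)) θ) : T ∈ totPosPrincipal K := by
  obtain ⟨φ⟩ := exists_real hp h2 hθ
  have huvK : (u : K) ^ 2 - p * v ^ 2 = -1 := by exact_mod_cast congrArg (Int.cast : ℤ → K) huv
  have hN : ((u : K) + v * θ) * (u - v * θ) = -1 := by
    linear_combination huvK - (v : K) ^ 2 * hθ
  have hspan : FractionalIdeal.spanSingleton (nonZeroDivisors (𝓞 K)) ((u : K) + v * θ) = 1 := by
    have h1 : ((u : 𝓞 K) + v * θ0) * -(u - v * θ0) = 1 := by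
      apply RingOfIntegers.coe_injective
      simp only [map_mul, map_add, map_neg, map_sub, map_intCast, hθ0, map_one]
      linear_combination -hN
    have h3 : Ideal.span {(u : 𝓞 K) + v * θ0} = ⊤ :=
      Ideal.span_singleton_eq_top.mpr (IsUnit.of_mul_eq_one _ h1)
    have h4 : algebraMap (𝓞 K) K (u + v * θ0) = u + v * θ := by
      simp only [map_mul, map_add, map_intCast, hθ0]
    rw [← h4, ← FractionalIdeal.coeIdeal_span_singleton, h3]
    simp
  obtain ⟨e, he, h | h⟩ := sign_cases hp h2 hθ σ hσ (u + v * θ)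
    (by intro h; rw [h] at hN; simp at hN)
  · exfalso
    have h1 := h φ
    have h3 := h (φ.comp (σ : K →+* K))
    have h4 : φ (e * (u + v * θ)) * (φ.comp (σ : K →+* K)) (e * (u + v * θ)) = -1 := by
      have h5 : (e * (u + v * θ)) * σ (e * (u + v * θ)) = -1 := by
        rw [map_mul, map_add, map_mul, hσ, map_intCast, map_intCast]
        rcases he with rfl | rfl <;> simp <;> linear_combination hN
      have := congrArg φ h5
      rw [map_mul, map_neg, map_one] at this
      exact this
    nlinarith [mul_pos h1 h3]
  · rw [mem_totPos]
    refine ⟨_, h, ?_⟩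
    rw [mul_assoc, spanSingleton_sign _ _ he, ← FractionalIdeal.spanSingleton_mul_spanSingleton,
      hspan, one_mul, hT]

lemma claimE2 {p : ℕ} (hp : p.Prime) (hp3 : p % 4 = 3)
    (h2 : Module.finrank ℚ K = 2) {θ : K} (hθ : θ ^ 2 = (p : K)) (σ : K ≃ₐ[ℚ] K)
    (hσ : σ θ = -θ) (s : 𝓞 K ≃+* 𝓞 K)
    (hs : ∀ a, algebraMap (𝓞 K) K (s a) = σ (algebraMap (𝓞 K) K a))
    (θ0 : 𝓞 K) (hθ0 : algebraMap (𝓞 K) K θ0 = θ)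
    (hrep : ∀ a : 𝓞 K, ∃ t Y n : ℤ, 2 * a = t + Y * θ0 ∧ a * s a = n ∧ a + s a = t ∧
      t ^ 2 - p * Y ^ 2 = 4 * n)
    (T : (FractionalIdeal (nonZeroDivisors (𝓞 K)) K)ˣ)
    (hT : (T : FractionalIdeal (nonZeroDivisors (𝓞 K)) K) =
      FractionalIdeal.spanSingleton (nonZeroDivisors (𝓞 K)) θ) : T ∉ totPosPrincipal K := by
  obtain ⟨φ⟩ := exists_real hp h2 hθ
  intro hmem
  obtain ⟨d, hd, hTd⟩ := (mem_totPos _).mp hmem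
  rw [hT, ← hθ0, ← FractionalIdeal.coeIdeal_span_singleton] at hTd
  obtain ⟨d0, hd0, hsp⟩ := span_of_coe hTd
  rw [Ideal.span_singleton_eq_span_singleton] at hsp
  obtain ⟨w, hw⟩ := hsp
  obtain ⟨t, Y, n, -, hn, -, h4⟩ := hrep w
  obtain ⟨-, -, n', -, hn', -, -⟩ := hrep (w⁻¹ : (𝓞 K)ˣ)
  have hnn : n * n' = 1 := by
    have : ((n * n' : ℤ) : 𝓞 K) = 1 := by
      push_cast
      rw [← hn, ← hn', mul_mul_mul_comm, ← map_mul, Units.mul_inv]; simp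
    exact_mod_cast this
  have hneg : n < 0 := by
    have hθσ : θ0 * s θ0 = -p := by
      apply RingOfIntegers.coe_injective
      rw [map_mul, hs, hθ0, hσ, map_neg, map_natCast, ← hθ]; ring
    have h5 : d0 * s d0 = -p * n := by
      rw [← hθσ, ← hn, ← hw, map_mul]
      ring_nf
    have h6 : 0 < φ (algebraMap (𝓞 K) K (d0 * s d0)) := by
      rw [map_mul, map_mul, hs, hd0]
      exact mul_pos (hd φ) (hd (φ.comp (σ : K →+* K)))
    rw [h5] at h6
    simp only [map_mul, map_neg, map_natCast, map_intCast] at h6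
    have hpp : (0 : ℝ) < p := by exact_mod_cast hp.pos
    have : (n : ℝ) < 0 := by nlinarith
    exact_mod_cast this
  have hn1 : n = -1 := by
    rcases Int.isUnit_iff.mp (IsUnit.of_mul_eq_one _ hnn) with h | h <;> omega
  subst hn1
  obtain ⟨r, hr⟩ : ∃ r : ℕ, p = 4 * r + 3 := ⟨p / 4, by omega⟩
  subst hr
  push_cast at h4
  rcases Int.even_or_odd' t with ⟨x, rfl | rfl⟩ <;> rcases Int.even_or_odd' Y with ⟨y, rfl | rfl⟩
  · have h7 : x ^ 2 + y ^ 2 = 4 * (r * y ^ 2 + y ^ 2) - 1 := by linarith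
    generalize (r : ℤ) * y ^ 2 + y ^ 2 = m at h7
    rcases Int.even_or_odd' x with ⟨x, rfl | rfl⟩ <;>
      rcases Int.even_or_odd' y with ⟨y, rfl | rfl⟩ <;> ring_nf at h7 <;> omega
  all_goals
    ring_nf at h4
    omega

lemma narrow_finite {p : ℕ} (hp : p.Prime) 
    (h2 : Module.finrank ℚ K = 2) {θ : K} (hθ : θ ^ 2 = (p : K)) (σ : K ≃ₐ[ℚ] K)
    (hσ : σ θ = -θ) (T : (FractionalIdeal (nonZeroDivisors (𝓞 K)) K)ˣ)
    (hT : (T : FractionalIdeal (nonZeroDivisors (𝓞 K)) K) =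
      FractionalIdeal.spanSingleton (nonZeroDivisors (𝓞 K)) θ) :
    Finite ((FractionalIdeal (nonZeroDivisors (𝓞 K)) K)ˣ ⧸ totPosPrincipal K) := by
  have hfin : Finite ((FractionalIdeal (nonZeroDivisors (𝓞 K)) K)ˣ ⧸
      (toPrincipalIdeal (𝓞 K) K).range) :=
    Finite.of_equiv _ (ClassGroup.equiv (R := 𝓞 K) K).toEquiv
  let f : ((FractionalIdeal (nonZeroDivisors (𝓞 K)) K)ˣ ⧸ (toPrincipalIdeal (𝓞 K) K).range) × Bool →
      (FractionalIdeal (nonZeroDivisors (𝓞 K)) K)ˣ ⧸ totPosPrincipal K :=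
    fun x => QuotientGroup.mk (x.1.out * (if x.2 then 1 else T⁻¹))
  apply Finite.of_surjective f
  intro y
  induction y using QuotientGroup.induction_on with
  | H I =>
  obtain ⟨⟨h, hh⟩, hI⟩ := QuotientGroup.mk_out_eq_mul (toPrincipalIdeal (𝓞 K) K).range I
  obtain ⟨c, hc⟩ := mem_principal_ideals_iff.mp (inv_mem hh)
  have hfst : ∀ b, f (QuotientGroup.mk I, b) =
    QuotientGroup.mk (I * h * (if b then 1 else T⁻¹)) := by
    intro b
    simp only [f]
    rw [hI]
  rcases claimC hp h2 hθ σ hσ T h⁻¹ hT c hc.symm with h3 | h3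
  · refine ⟨(QuotientGroup.mk I, true), ?_⟩
    rw [hfst, QuotientGroup.eq]
    convert! h3 using 1
    simp
  · refine ⟨(QuotientGroup.mk I, false), ?_⟩
    rw [hfst, QuotientGroup.eq]
    convert! h3 using 1
    simp [mul_comm, mul_assoc]

lemma final_card {G Q : Type*} [CommGroup G] [CommGroup Q] (hfin : Finite Q) (N : Subgroup G)
    (f : G →* Q) (hf : Function.Surjective f) (hfN : ∀ x, f x = 1 ↔ x ∈ N)
    (T : G) (hT2 : T * T ∈ N) (hD : ∀ I, I * I ∈ N → I ∈ N ∨ I * T ∈ N) :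
    (T ∈ N → Nat.card (Q ⧸ (powMonoidHom 2 : Q →* Q).range) = 1) ∧
    (T ∉ N → Nat.card (Q ⧸ (powMonoidHom 2 : Q →* Q).range) = 2) := by
  have hTT : f T * f T = 1 := by rw [← map_mul, hfN]; exact hT2
  have hidx : Nat.card (Q ⧸ (powMonoidHom 2 : Q →* Q).range) = Set.ncard {1, f T} := by
    have hk : ((powMonoidHom 2 : Q →* Q).ker : Set Q) = {1, f T} := by
      ext y
      obtain ⟨I, rfl⟩ := hf y
      simp only [SetLike.mem_coe, MonoidHom.mem_ker, powMonoidHom_apply, Set.mem_insert_iff,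
        Set.mem_singleton_iff]
      rw [sq]
      constructor
      · intro h
        rw [← map_mul, hfN] at h
        rcases hD I h with h1 | h1
        · exact Or.inl ((hfN I).mpr h1)
        · right
          rw [← hfN, map_mul] at h1
          rw [mul_eq_one_iff_eq_inv.mp h1]
          exact (mul_eq_one_iff_eq_inv.mp hTT).symm
      · rintro (h | h)
        · rw [h, one_mul]
        · rw [h, hTT]
    change Subgroup.index _ = _
    rw [Subgroup.index_range, ← hk]
    rfl
  rw [hidx]
  constructor
  · intro h
    rw [(hfN T).mpr h]
    simp
  · intro h
    rw [Set.ncard_pair]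
    intro h'
    exact h ((hfN T).mp h'.symm)

end grouplevel

/-- For `F = ℚ(√p)` with `p` prime, the Gauss genus group
`Pic⁺(O_F)/Pic⁺(O_F)²` has order `1` if `p = 2` or `p ≡ 1 (mod 4)`, and
order `2` if `p ≡ 3 (mod 4)`. -/
theorem gauss_genus_group_order
    (p : ℕ) (hp : p.Prime)
    (K : Type*) [Field K] [NumberField K]
    (h2 : Module.finrank ℚ K = 2) (θ : K) (hθ : θ ^ 2 = (p : K)) :
    ((p = 2 ∨ p % 4 = 1) →
      Nat.card (narrowClassGroup K ⧸
        (powMonoidHom 2 : narrowClassGroup K →* narrowClassGroup K).range) = 1) ∧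
    (p % 4 = 3 →
      Nat.card (narrowClassGroup K ⧸
        (powMonoidHom 2 : narrowClassGroup K →* narrowClassGroup K).range) = 2) := by
  obtain ⟨hG, σ, hσ, hσall⟩ := exists_conj hp h2 hθ
  have hθ00 : θ ≠ 0 := by
    rintro rfl
    have : (p : K) = 0 := by rw [← hθ]; simp
    exact hp.ne_zero (by exact_mod_cast this)
  let s : 𝓞 K ≃+* 𝓞 K := RingOfIntegers.mapRingEquiv (σ : K ≃+* K)
  have hs : ∀ a, algebraMap (𝓞 K) K (s a) = σ (algebraMap (𝓞 K) K a) := fun a => rfl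
  have hσσ : ∀ a, σ (σ a) = a := by
    intro a
    obtain ⟨x, y, rfl⟩ := quad_repr hp h2 hθ a
    simp [hσ]
  have hss : ∀ a, s (s a) = a := by
    intro a
    apply RingOfIntegers.coe_injective
    rw [hs, hs, hσσ]
  have hθint : IsIntegral ℤ θ := by
    apply IsIntegral.of_pow (n := 2) (by norm_num)
    rw [hθ]
    have := isIntegral_algebraMap (R := ℤ) (A := K) (x := (p : ℤ))
    simpa using this
  obtain ⟨θ0, hθ0⟩ : ∃ θ0 : 𝓞 K, algebraMap (𝓞 K) K θ0 = θ := ⟨⟨θ, hθint⟩, rfl⟩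
  have hθ0sq : θ0 ^ 2 = (p : 𝓞 K) := by
    apply RingOfIntegers.coe_injective
    rw [map_pow, hθ0, hθ, map_natCast]
  have hrep := int_repr hp h2 θ0 hθ0sq σ (by rw [hθ0, hσ]) s hs
  have hprime := prime_cases h2 σ hσall s hs
  have hmod : ∀ {u v : ℤ} {e : ℤ}, u ^ 2 - p * v ^ 2 = e → 
      (p % 4 = 3 → e ≠ -1) ∧ (p % 4 = 1 → e ≠ 2 ∧ e ≠ -2) := by
    intro u v e h
    have hpd : (p : ℤ) = 4 * (p / 4 : ℕ) + (p % 4 : ℕ) := by exact_mod_cast (Nat.div_add_mod p 4).symm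
    constructor
    · intro h3 he
      subst he
      rw [h3] at hpd
      have h7 : u ^ 2 + v ^ 2 = 4 * ((p / 4 : ℕ) * v ^ 2 + v ^ 2) - 1 := by
        rw [hpd] at h; push_cast at h ⊢; linarith
      generalize ((p / 4 : ℕ) : ℤ) * v ^ 2 + v ^ 2 = m at h7
      rcases Int.even_or_odd' u with ⟨x, rfl | rfl⟩ <;>
        rcases Int.even_or_odd' v with ⟨y, rfl | rfl⟩ <;> ring_nf at h7 <;> omega
    · intro h1
      rw [h1] at hpd
      have h7 : u ^ 2 - v ^ 2 = 4 * ((p / 4 : ℕ) * v ^ 2) + e := by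
        rw [hpd] at h; push_cast at h ⊢; linarith
      generalize ((p / 4 : ℕ) : ℤ) * v ^ 2 = m at h7
      rcases Int.even_or_odd' u with ⟨x, rfl | rfl⟩ <;>
        rcases Int.even_or_odd' v with ⟨y, rfl | rfl⟩ <;> ring_nf at h7 <;> omega
  obtain ⟨u, v, huv⟩ := pell_three hp
  have hq2 : (p % 4 = 1 ∧ ∃ ω : 𝓞 K, 2 * ω = 1 + θ0) ∨ p = 2 ∨
      ∃ u v : ℤ, u ^ 2 - p * v ^ 2 = 2 ∨ u ^ 2 - p * v ^ 2 = -2 := by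
    rcases hp.eq_two_or_odd with h | h
    · exact Or.inr (Or.inl h)
    · rcases (by omega : p % 4 = 1 ∨ p % 4 = 3) with h1 | h1
      · left
        refine ⟨h1, ?_⟩
        have hω : IsIntegral ℤ ((1 + θ) / 2) := by
          refine ⟨Polynomial.X ^ 2 - Polynomial.X - Polynomial.C ((p / 4 : ℕ) : ℤ), ?_, ?_⟩
          · monicity!
          · have hpd : (p : K) = 4 * (p / 4 : ℕ) + 1 := by
              have := Nat.div_add_mod p 4
              rw [h1] at this
              exact_mod_cast this.symm
            rw [hpd] at hθ
            simp only [Polynomial.eval₂_sub, Polynomial.eval₂_pow, Polynomial.eval₂_X,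
              map_natCast, Polynomial.eval₂_natCast]
            generalize (((p / 4 : ℕ)) : K) = m at hθ ⊢
            field_simp
            linear_combination hθ
        obtain ⟨ω, hω'⟩ : ∃ ω : 𝓞 K, algebraMap (𝓞 K) K ω = (1 + θ) / 2 := ⟨⟨_, hω⟩, rfl⟩
        refine ⟨ω, ?_⟩
        apply RingOfIntegers.coe_injective
        rw [map_mul, map_add, hθ0, map_one, map_ofNat, hω']
        field_simp
      · right; right
        rcases huv with h3 | h3
        · exact absurd rfl ((hmod h3).1 h1)
        · exact ⟨u, v, h3⟩
  have hram := ramified_principal hp θ0 hθ0sq s hrep hq2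
  have hinv := invariant_principal s hss hprime hram
  have hnorm := norm_exists s hprime
  let T : (FractionalIdeal (nonZeroDivisors (𝓞 K)) K)ˣ :=
    toPrincipalIdeal (𝓞 K) K (Units.mk0 θ hθ00)
  have hT : (T : FractionalIdeal (nonZeroDivisors (𝓞 K)) K) =
      FractionalIdeal.spanSingleton (nonZeroDivisors (𝓞 K)) θ := by
    simp [T]
  have hN : ∀ a : 𝓞 K, ∃ n : ℤ, a * s a = n := fun a => by
    obtain ⟨_, _, n, _, h, _⟩ := hrep a
    exact ⟨n, h⟩
  have hD : ∀ I, I * I ∈ totPosPrincipal K → I ∈ totPosPrincipal K ∨ I * T ∈ totPosPrincipal K := by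
    intro I hI
    obtain ⟨c, hc⟩ := claimD hp h2 hθ σ s hs hss hN hnorm hinv I hI
    exact claimC hp h2 hθ σ hσ T I hT c hc
  have hT2 : T * T ∈ totPosPrincipal K := by
    rw [mem_totPos]
    refine ⟨θ * θ, fun φ => ?_, ?_⟩
    · rw [map_mul]; exact mul_self_pos.mpr ((map_ne_zero φ).mpr hθ00)
    · rw [Units.val_mul, hT, FractionalIdeal.spanSingleton_mul_spanSingleton]
  have key := final_card (Q := narrowClassGroup K) (narrow_finite hp h2 hθ σ hσ T hT)
    (totPosPrincipal K) (QuotientGroup.mk' (totPosPrincipal K))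
    (QuotientGroup.mk'_surjective _) (fun x => QuotientGroup.eq_one_iff x) T hT2 hD
  constructor
  · intro h
    refine key.1 ?_
    obtain ⟨u, v, huv⟩ : ∃ u v : ℤ, u ^ 2 - p * v ^ 2 = -1 := by
      rcases h with rfl | h1
      · exact ⟨1, 1, by norm_num⟩
      · rcases huv with h3 | h3 | h3
        · exact ⟨u, v, h3⟩
        · exact absurd rfl ((hmod h3).2 h1).1
        · exact absurd rfl ((hmod h3).2 h1).2
    exact claimE1 hp h2 hθ σ hσ u v huv θ0 hθ0 T hT
  · intro h
    exact key.2 (claimE2 hp h h2 hθ σ hσ s hs θ0 hθ0 hrep T hT)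
end
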